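/- arXiv:2204.02182 — 3 statements merged into one kernel-verified Lean document; each statement's English description precedes it below -/
import Mathlib

section
/- Let N, M ≥ 1 be integers and T > 0. Suppose φ : [0,T) → ℂ³, a_j : [0,T) → ℂ, s_j : [0,T) → ℂ³ (j = 1,…,N) and b_j : [0,T) → ℂ, t_j : [0,T) → ℂ³ (j = 1,…,M) are differentiable, satisfy a_j − a_k ∉ Λ and b_j − b_k ∉ Λ for j ≠ k and a_j − b_k + iδ ∉ Λ for all j, k on [0,T), solve on [0,T) the first-order system: ṡ_j = −2Σ_{k≠j} (s_j∧s_k) ℘₂(a_j−a_k); ṫ_j = −2Σ_{k≠j} (t_j∧t_k) ℘₂(b_j−b_k); s_j ȧ_j = −s_j∧(iφ − Σ_{k≠j} s_k ζ₂(a_j−a_k) + Σ_{k=1}^{M} t_k ζ₂(a_j−b_k+iδ)); t_j ḃ_j = +t_j∧(iφ + Σ_{k≠j} t_k ζ₂(b_j−b_k) − Σ_{k=1}^{N} s_k ζ₂(b_j−a_k+iδ)); φ̇ = (i/2)Σ_{j=1}^{N}Σ_{k≠j} (s_j∧s_k) f₂′(a_j−a_k) − (i/2)Σ_{j=1}^{M}Σ_{k≠j}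 (t_j∧t_k) f₂′(b_j−b_k), and satisfy Σ_{j=1}^{N} s_j(0) − Σ_{j=1}^{M} t_j(0) = 0. Then for each j ≤ N the quantity Q_j(t) = s_j·(iφ − Σ_{k≠j} s_k ζ₂(a_j−a_k) + Σ_{k=1}^{M} t_k ζ₂(a_j−b_k+iδ)) is constant on [0,T), and for each j ≤ M the quantity Q_{N+j}(t) = t_j·(iφ + Σ_{k≠j} t_k ζ₂(b_j−b_k) − Σ_{k=1}^{N} s_k ζ₂(b_j−a_k+iδ)) is constant on [0,T). -/
open Complex Filter MeasureTheory Finset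

noncomputable section

/-- The period lattice with half-periods `ℓ` and `iδ`. -/
def Lambda (ℓ δ : ℝ) : Set ℂ :=
  {z | ∃ n m : ℤ, z = 2 * (n : ℂ) * (ℓ : ℂ) + 2 * (m : ℂ) * ((δ : ℂ) * Complex.I)}

/-- The nonzero lattice points. -/
def latticePts (ℓ δ : ℝ) : Set ℂ := Lambda ℓ δ \ {0}

/-- Weierstrass ℘-function with half-periods `ℓ`, `iδ`. -/
def wP (ℓ δ : ℝ) (z : ℂ) : ℂ :=
  1 / z ^ 2 + ∑' ω : latticePts ℓ δ, (1 / (z - (ω : ℂ)) ^ 2 - 1 / (ω : ℂ) ^ 2)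

/-- Weierstrass ζ-function with half-periods `ℓ`, `iδ`. -/
def wZeta (ℓ δ : ℝ) (z : ℂ) : ℂ :=
  1 / z + ∑' ω : latticePts ℓ δ, (1 / (z - (ω : ℂ)) + 1 / (ω : ℂ) + z / (ω : ℂ) ^ 2)

def zeta2 (ℓ δ : ℝ) (z : ℂ) : ℂ :=
  wZeta ℓ δ z - (wZeta ℓ δ ((δ : ℂ) * Complex.I) / ((δ : ℂ) * Complex.I)) * z

def wp2 (ℓ δ : ℝ) (z : ℂ) : ℂ :=
  wP ℓ δ z + wZeta ℓ δ ((δ : ℂ) * Complex.I) / ((δ : ℂ) * Complex.I)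

def f2 (ℓ δ : ℝ) (z : ℂ) : ℂ := (zeta2 ℓ δ z) ^ 2 - wp2 ℓ δ z

def zeta1 (ℓ δ : ℝ) (z : ℂ) : ℂ :=
  wZeta ℓ δ z - (wZeta ℓ δ (ℓ : ℂ) / (ℓ : ℂ)) * z

/-- Bilinear dot product on `ℂ³` (no conjugation). -/
def dot3 (s t : Fin 3 → ℂ) : ℂ := s 0 * t 0 + s 1 * t 1 + s 2 * t 2

/-- Cross product on `ℂ³`. -/
def cross3 (s t : Fin 3 → ℂ) : Fin 3 → ℂ :=
  ![s 1 * t 2 - s 2 * t 1, s 2 * t 0 - s 0 * t 2, s 0 * t 1 - s 1 * t 0]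

/-- The principal-value integral operator `T`. -/
def pvT (ℓ δ : ℝ) (f : ℝ → Fin 3 → ℂ) (x : ℝ) : Fin 3 → ℂ := fun i =>
  (1 / (Real.pi : ℂ)) * limUnder (nhdsWithin (0 : ℝ) (Set.Ioi 0)) (fun ε : ℝ =>
    ∫ y in {y : ℝ | y ∈ Set.Icc (-ℓ) ℓ ∧ ε ≤ |y - x|},
      zeta1 ℓ δ ((y : ℂ) - (x : ℂ)) * f y i)

/-- The integral operator `T̃`. -/
def tilT (ℓ δ : ℝ) (f : ℝ → Fin 3 → ℂ) (x : ℝ) : Fin 3 → ℂ := fun i =>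
  (1 / (Real.pi : ℂ)) * ∫ y in Set.Icc (-ℓ) ℓ,
      zeta1 ℓ δ ((y : ℂ) - (x : ℂ) + (δ : ℂ) * Complex.I) * f y i

namespace QAux
open scoped Topology

/-- The Weierstrass zeta function with the pole at the origin removed. -/
def zReg (L : PeriodPair) (z : ℂ) : ℂ :=
  ∑' l : L.lattice, if (l : ℂ) = 0 then 0 else (1 / (z - l) + 1 / (l : ℂ) + z / (l : ℂ) ^ 2)

lemma zeta_bound (r : ℝ) (hr : 0 < r) (s : ℂ) (hs : ‖s‖ < r) (l : ℂ) (h : 2 * r ≤ ‖l‖) :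
    ‖1 / (s - l) + 1 / l + s / l ^ 2‖ ≤ 2 * r ^ 2 * ‖l‖ ^ (-3 : ℝ) := by
  have h1 : s ≠ l := by rintro rfl; linarith
  have h0 : 0 < ‖l‖ := by linarith
  have hl : l ≠ 0 := norm_pos_iff.mp h0
  have h2 : s - l ≠ 0 := sub_ne_zero.mpr h1
  have h3 : ‖l‖ / 2 ≤ ‖s - l‖ := by
    rw [norm_sub_rev]
    exact .trans (by linarith) (norm_sub_norm_le l s)
  calc
    _ = ‖s ^ 2 / ((s - l) * l ^ 2)‖ := by
      congr 1
      field_simp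
      ring
    _ = ‖s‖ ^ 2 / (‖s - l‖ * ‖l‖ ^ 2) := by simp
    _ ≤ r ^ 2 / (‖l‖ / 2 * ‖l‖ ^ 2) := by gcongr
    _ = 2 * r ^ 2 / ‖l‖ ^ 3 := by field_simp
    _ = _ := by norm_cast

lemma hasSumLU_zReg (L : PeriodPair) :
    HasSumLocallyUniformly
      (fun (l : L.lattice) (z : ℂ) ↦
        if (l : ℂ) = 0 then 0 else (1 / (z - l) + 1 / (l : ℂ) + z / (l : ℂ) ^ 2)) (zReg L) := by
  refine L.hasSumLocallyUniformly_aux (u := fun r l ↦ 2 * r ^ 2 * ‖l‖ ^ (-3 : ℝ)) _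
    (fun _ _ ↦ (ZLattice.summable_norm_rpow _ _ (by simp; norm_num)).mul_left _) fun r hr ↦
    Filter.eventually_atTop.mpr ⟨2 * r, ?_⟩
  rintro _ h s hs l rfl
  split_ifs
  · rw [norm_zero]; positivity
  · exact zeta_bound r hr s hs l h

lemma summand_hasDerivAt (l z : ℂ) (h : z - l ≠ 0) :
    HasDerivAt (fun z : ℂ ↦ 1 / (z - l) + 1 / l + z / l ^ 2)
      (-(1 / (z - l) ^ 2 - 1 / l ^ 2)) z := by
  have h1 : HasDerivAt (fun z : ℂ ↦ (z - l)⁻¹) (-1 / (z - l) ^ 2) z :=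
    HasDerivAt.inv ((hasDerivAt_id z).sub_const l) h
  have h2 : HasDerivAt (fun z : ℂ ↦ z / l ^ 2) (1 / l ^ 2) z := (hasDerivAt_id z).div_const _
  have := (h1.add_const (1 / l)).add h2
  simp only [← one_div] at this
  refine HasDerivAt.congr_deriv this ?_
  ring

lemma ite_hasDerivAt (L : PeriodPair) (l : L.lattice) (z : ℂ)
    (hz : z ∈ ((L.lattice : Set ℂ) \ {0})ᶜ) :
    HasDerivAt (fun z : ℂ ↦
        if (l : ℂ) = 0 then 0 else (1 / (z - l) + 1 / (l : ℂ) + z / (l : ℂ) ^ 2))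
      (-(if (l : ℂ) = 0 then 0 else (1 / (z - l) ^ 2 - 1 / (l : ℂ) ^ 2))) z := by
  by_cases h : (l : ℂ) = 0
  · simp only [h, if_true, neg_zero]; exact hasDerivAt_const _ _
  · simp only [h, if_false]
    refine summand_hasDerivAt _ _ fun e ↦ hz ?_
    rw [sub_eq_zero] at e
    exact ⟨e ▸ l.2, by rw [e]; exact h⟩

lemma hasDerivAt_zReg (L : PeriodPair) (z : ℂ) (hz : z ∈ ((L.lattice : Set ℂ) \ {0})ᶜ) :
    HasDerivAt (zReg L) (-(L.weierstrassPExcept 0 z)) z := by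
  have hd : DifferentiableOn ℂ (zReg L) ((L.lattice : Set ℂ) \ {0})ᶜ := by
    refine (hasSumLU_zReg L).hasSumLocallyUniformlyOn.differentiableOn
      (.of_forall fun s ↦ .fun_sum fun i hi x hx ↦ ?_) L.isOpen_compl_lattice_sdiff
    exact (ite_hasDerivAt L i x hx).differentiableAt.differentiableWithinAt
  have he : Set.EqOn (deriv (zReg L)) (fun z ↦ -(L.weierstrassPExcept 0 z))
      ((L.lattice : Set ℂ) \ {0})ᶜ := by
    refine ((hasSumLU_zReg L).tendstoLocallyUniformlyOn.deriv
      (.of_forall fun s ↦ ?_) L.isOpen_compl_lattice_sdiff).unique ?_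
    · refine .fun_sum fun i hi x hx ↦ ?_
      exact (ite_hasDerivAt L i x hx).differentiableAt.differentiableWithinAt
    · refine TendstoLocallyUniformlyOn.congr
        (F := fun s z ↦ - ∑ l ∈ s,
          (fun (l : L.lattice) (z : ℂ) ↦ if l.1 = 0 then 0 else (1 / (z - l) ^ 2 - 1 / l ^ 2)) l z)
        ?_ ?_
      · exact (L.hasSumLocallyUniformly_weierstrassPExcept 0).tendstoLocallyUniformlyOn.neg
      · intro s x hx
        simp only [Function.comp_apply]
        rw [deriv_fun_sum fun i _ ↦ (ite_hasDerivAt L i x hx).differentiableAt,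
          ← Finset.sum_neg_distrib]
        exact Finset.sum_congr rfl fun i _ ↦ (ite_hasDerivAt L i x hx).deriv.symm
  exact (hd.differentiableAt (L.isOpen_compl_lattice_sdiff.mem_nhds hz)).hasDerivAt.congr_deriv
    (he hz)

lemma zReg_neg (L : PeriodPair) (z : ℂ) : zReg L (-z) = -zReg L z := by
  simp only [zReg]
  rw [← (Equiv.neg L.lattice).tsum_eq, ← tsum_neg]
  congr with l
  by_cases h : (l : ℂ) = 0
  · simp [h]
  · have e : -z - -(l : ℂ) = -(z - l) := by ring
    simp only [Equiv.neg_apply, NegMemClass.coe_neg, neg_eq_zero, h, if_false, e]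
    simp only [one_div, inv_neg, even_two.neg_pow]
    ring

/-- The Weierstrass zeta function. -/
def Z (L : PeriodPair) (z : ℂ) : ℂ := 1 / z + zReg L z

lemma P_eq (L : PeriodPair) (z : ℂ) : L.weierstrassP z = 1 / z ^ 2 + L.weierstrassPExcept 0 z := by
  have := L.weierstrassPExcept_add 0 z
  simp at this
  rw [← this]; simp [add_comm]

lemma notMem_except {L : PeriodPair} {z : ℂ} (hz : z ∉ L.lattice) :
    z ∈ ((L.lattice : Set ℂ) \ {0})ᶜ := fun h ↦ hz h.1

lemma ne_zero_of_notMem {L : PeriodPair} {z : ℂ} (hz : z ∉ L.lattice) : z ≠ 0 := by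
  rintro rfl; exact hz (zero_mem _)

lemma hasDerivAt_Z (L : PeriodPair) (z : ℂ) (hz : z ∉ L.lattice) :
    HasDerivAt (Z L) (-(L.weierstrassP z)) z := by
  have h0 := ne_zero_of_notMem hz
  have h1 : HasDerivAt (fun z : ℂ ↦ z⁻¹) (-(z ^ 2)⁻¹) z := hasDerivAt_inv h0
  have := h1.add (hasDerivAt_zReg L z (notMem_except hz))
  simp only [← one_div] at this
  refine HasDerivAt.congr_deriv this ?_
  rw [P_eq]; ring

lemma Z_neg (L : PeriodPair) (z : ℂ) : Z L (-z) = -Z L z := by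
  simp only [Z, zReg_neg, one_div, inv_neg]; ring

lemma Z_zero (L : PeriodPair) : Z L 0 = 0 := by
  have := Z_neg L 0
  rw [neg_zero] at this
  exact CharZero.eq_neg_self_iff.mp this

lemma compl_isOpen (L : PeriodPair) : IsOpen ((L.lattice : Set ℂ)ᶜ) := L.isClosed_lattice.isOpen_compl

lemma add_notMem {L : PeriodPair} {z l : ℂ} (hl : l ∈ L.lattice) (hz : z ∉ L.lattice) :
    z + l ∉ L.lattice := fun h ↦ hz (by simpa using sub_mem h hl)

lemma Z_quasi (L : PeriodPair) (l : ℂ) (hl : l ∈ L.lattice) :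
    ∃ c, ∀ z, z ∉ L.lattice → Z L (z + l) = Z L z + c := by
  have hc : (L.lattice : Set ℂ).Countable := by
    have : Countable L.lattice := L.latticeEquivProd.toEquiv.countable_iff.mpr inferInstance
    exact Set.to_countable _
  have hconn : IsPreconnected ((L.lattice : Set ℂ)ᶜ) :=
    (hc.isPathConnected_compl_of_one_lt_rank
      (by rw [Complex.rank_real_complex]; norm_num)).isConnected.isPreconnected
  have hder : ∀ z ∈ (L.lattice : Set ℂ)ᶜ, HasDerivAt (fun z ↦ Z L (z + l) - Z L z) 0 z := by
    intro z hz
    have h1 := (hasDerivAt_Z L (z + l) (add_notMem hl hz)).comp_add_const z l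
    refine (h1.sub (hasDerivAt_Z L z hz)).congr_deriv ?_
    have := L.weierstrassP_add_coe z ⟨l, hl⟩
    simp only at this
    rw [this]; ring
  obtain ⟨c, hc⟩ := (compl_isOpen L).exists_is_const_of_deriv_eq_zero hconn
    (fun z hz ↦ (hder z hz).differentiableAt.differentiableWithinAt) (fun z hz ↦ (hder z hz).deriv)
  exact ⟨c, fun z hz ↦ by rw [← hc z hz]; ring⟩

lemma eventually_notMem (L : PeriodPair) (p : ℂ) : ∀ᶠ x in 𝓝[≠] p, x ∉ L.lattice := by
  have h := L.compl_lattice_sdiff_singleton_mem_nhds p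
  filter_upwards [nhdsWithin_le_nhds h, self_mem_nhdsWithin] with x hx hxp hm
  exact hx ⟨hm, hxp⟩

lemma tendsto_add_punct (p l : ℂ) : Tendsto (fun x ↦ x + l) (𝓝[≠] p) (𝓝[≠] (p + l)) := by
  refine tendsto_nhdsWithin_of_tendsto_nhds_of_eventually_within _ ?_ ?_
  · exact ((continuous_id.add continuous_const).tendsto p).mono_left nhdsWithin_le_nhds
  · filter_upwards [self_mem_nhdsWithin] with x hx
    simpa using hx

/-- A Liouville theorem for doubly periodic functions with removable singularities. -/
lemma liouville (L : PeriodPair) (G : ℂ → ℂ)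
    (hper : ∀ l ∈ L.lattice, ∀ p, ∀ᶠ x in 𝓝[≠] p, G (x + l) = G x)
    (hloc : ∀ p, ∃ h : ℂ → ℂ, AnalyticAt ℂ h p ∧ G =ᶠ[𝓝[≠] p] h) :
    ∃ c, ∀ p, ∀ᶠ x in 𝓝[≠] p, G x = c := by
  choose h hh hG using hloc
  have key : ∀ p, (fun q ↦ h q q) =ᶠ[𝓝 p] h p := by
    intro p
    have h1 : ∀ᶠ q in 𝓝 p, ∀ᶠ x in 𝓝[≠] q, G x = h p x := by
      have h2 : ∀ᶠ x in 𝓝 p, x ≠ p → G x = h p x := eventually_nhdsWithin_iff.mp (hG p)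
      filter_upwards [eventually_eventually_nhds.mpr h2] with q hq
      by_cases e : q = p
      · rw [e]; exact hG p
      · refine nhdsWithin_le_nhds ?_
        filter_upwards [hq, isOpen_ne.mem_nhds e] with x hx hx'
        exact hx hx'
    filter_upwards [h1, (hh p).eventually_analyticAt] with q hq hqa
    have t1 : Tendsto (h q) (𝓝[≠] q) (𝓝 (h q q)) :=
      (hh q).continuousAt.tendsto.mono_left nhdsWithin_le_nhds
    have t2 : Tendsto (h p) (𝓝[≠] q) (𝓝 (h p q)) :=
      hqa.continuousAt.tendsto.mono_left nhdsWithin_le_nhds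
    refine tendsto_nhds_unique (t1.congr' ?_) t2
    filter_upwards [hq, hG q] with x hx hx'
    rw [← hx, hx']
  set F : ℂ → ℂ := fun q ↦ h q q with hF
  have hFd : Differentiable ℂ F := fun p ↦ ((hh p).congr (key p).symm).differentiableAt
  have hFG : ∀ p, G =ᶠ[𝓝[≠] p] F := fun p ↦ (hG p).trans ((key p).symm.filter_mono nhdsWithin_le_nhds)
  have hFper : ∀ z, ∀ l ∈ L.lattice, F (z + l) = F z := by
    intro z l hl
    have t1 : Tendsto (fun x ↦ F (x + l)) (𝓝[≠] z) (𝓝 (F (z + l))) :=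
      ((hFd.continuous.comp (continuous_id.add continuous_const)).tendsto z).mono_left
        nhdsWithin_le_nhds
    have t2 : Tendsto F (𝓝[≠] z) (𝓝 (F z)) :=
      (hFd.continuous.tendsto z).mono_left nhdsWithin_le_nhds
    refine tendsto_nhds_unique (t1.congr' ?_) t2
    filter_upwards [hper l hl z, hFG z, (tendsto_add_punct z l).eventually (hFG (z + l))]
      with x h1 h2 h3
    rw [← h3, h1, h2]
  refine ⟨F 0, fun p ↦ ?_⟩
  filter_upwards [hFG p] with x hx
  rw [hx]
  exact hFd.apply_eq_apply_of_bounded (IsZLattice.isCompact_range_of_periodic L.lattice _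
    hFd.continuous fun z w hw ↦ hFper z w hw).isBounded x 0

lemma factor {f : ℂ → ℂ} {p : ℂ} (hf : AnalyticAt ℂ f p) :
    ∃ g : ℂ → ℂ, AnalyticAt ℂ g p ∧ g p = deriv f p ∧ ∀ z, f z = f p + (z - p) * g z := by
  refine ⟨dslope f p, ?_, dslope_same f p, fun z ↦ ?_⟩
  · obtain ⟨q, hq⟩ := hf
    exact ⟨_, hq.has_fpower_series_dslope_fslope⟩
  · have := sub_smul_dslope f p z
    rw [smul_eq_mul] at this
    rw [this]; ring


lemma analyticAt_zReg (L : PeriodPair) : AnalyticAt ℂ (zReg L) 0 := by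
  have hd : DifferentiableOn ℂ (zReg L) ((L.lattice : Set ℂ) \ {0})ᶜ := fun z hz ↦
    (hasDerivAt_zReg L z hz).differentiableAt.differentiableWithinAt
  exact hd.analyticOnNhd L.isOpen_compl_lattice_sdiff 0 (by simp)

lemma analyticAt_Z (L : PeriodPair) (z : ℂ) (hz : z ∉ L.lattice) : AnalyticAt ℂ (Z L) z := by
  have hd : DifferentiableOn ℂ (Z L) ((L.lattice : Set ℂ)ᶜ) := fun z hz ↦
    (hasDerivAt_Z L z hz).differentiableAt.differentiableWithinAt
  exact hd.analyticOnNhd (compl_isOpen L) z hz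

/-- The defect in the addition formula. -/
def G (L : PeriodPair) (y x : ℂ) : ℂ :=
  L.derivWeierstrassP x - L.derivWeierstrassP y
    - 2 * (L.weierstrassP x - L.weierstrassP y) * (Z L (x + y) - Z L x - Z L y)

lemma G_per (L : PeriodPair) (y l : ℂ) (hl : l ∈ L.lattice) (x : ℂ) (hx : x ∉ L.lattice)
    (hxy : x + y ∉ L.lattice) : G L y (x + l) = G L y x := by
  obtain ⟨c, hc⟩ := Z_quasi L l hl
  have h1 := L.weierstrassP_add_coe x ⟨l, hl⟩
  have h2 := L.derivWeierstrassP_add_coe x ⟨l, hl⟩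
  simp only at h1 h2
  have e : x + l + y = x + y + l := by ring
  simp only [G, h1, h2, e, hc x hx, hc _ hxy]
  ring

lemma G_loc_neg (L : PeriodPair) (y : ℂ) (hy : y ∉ L.lattice) :
    ∃ h : ℂ → ℂ, AnalyticAt ℂ h (-y) ∧ G L y =ᶠ[𝓝[≠] (-y)] h ∧ h (-y) = 0 := by
  have hny : -y ∉ L.lattice := fun h ↦ hy (by simpa using neg_mem h)
  have hP : AnalyticAt ℂ L.weierstrassP (-y) := L.analyticOnNhd_weierstrassP _ hny
  have hP' : AnalyticAt ℂ L.derivWeierstrassP (-y) := L.analyticOnNhd_derivWeierstrassP _ hny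
  obtain ⟨g, hg, hg0, hgf⟩ := factor hP
  rw [L.deriv_weierstrassP, L.derivWeierstrassP_neg] at hg0
  rw [L.weierstrassP_neg] at hgf
  have hZ := analyticAt_Z L _ hny
  have hR : AnalyticAt ℂ (fun x ↦ zReg L (x + y)) (-y) := by
    refine AnalyticAt.fun_comp (f := fun x ↦ x + y) ?_ (by fun_prop)
    simpa using analyticAt_zReg L
  refine ⟨fun x ↦ L.derivWeierstrassP x - L.derivWeierstrassP y - 2 * g x
    - 2 * (L.weierstrassP x - L.weierstrassP y) * (zReg L (x + y) - Z L x - Z L y), ?_, ?_, ?_⟩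
  · fun_prop
  · filter_upwards [self_mem_nhdsWithin] with x hx
    have hx' : x + y ≠ 0 := fun e ↦ hx (eq_neg_of_add_eq_zero_left e)
    have e := hgf x
    simp only [sub_neg_eq_add] at e
    have eZ : Z L (x + y) = 1 / (x + y) + zReg L (x + y) := rfl
    simp only [G]
    rw [eZ, e]
    field_simp
    ring
  · simp only [L.weierstrassP_neg, L.derivWeierstrassP_neg, hg0]
    ring

lemma G_loc_zero (L : PeriodPair) (y : ℂ) (hy : y ∉ L.lattice) :
    ∃ h : ℂ → ℂ, AnalyticAt ℂ h 0 ∧ G L y =ᶠ[𝓝[≠] 0] h := by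
  obtain ⟨Z1, hZ1, hZ10, hZ1f⟩ := factor (analyticAt_zReg L)
  have hR0 : zReg L 0 = 0 := by simp [zReg]
  rw [(hasDerivAt_zReg L 0 (by simp)).deriv, L.weierstrassPExcept_zero, neg_zero] at hZ10
  obtain ⟨Z2, hZ2, -, hZ2f⟩ := factor hZ1
  obtain ⟨P1, hP1, -, hP1f⟩ := factor (L.analyticAt_weierstrassPExcept 0)
  have hS : AnalyticAt ℂ (fun x ↦ Z L (x + y)) 0 := by
    refine AnalyticAt.fun_comp (f := fun x ↦ x + y) ?_ (by fun_prop)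
    simpa using analyticAt_Z L y hy
  have hSd : deriv (fun x ↦ Z L (x + y)) 0 = -L.weierstrassP y := by
    have := hasDerivAt_Z L (0 + y) (by simpa using hy)
    simpa using (this.comp_add_const 0 y).deriv
  obtain ⟨H, hH, hH0, hHf⟩ := factor hS
  obtain ⟨K, hK, -, hKf⟩ := factor hH
  have hPE := L.analyticAt_derivWeierstrassPExcept 0
  simp only [sub_zero, zero_add] at hZ1f hZ2f hP1f hHf hKf
  rw [hSd] at hH0
  rw [hR0] at hZ1f
  rw [hZ10] at hZ2f
  simp only [L.weierstrassPExcept_zero] at hP1f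
  rw [hH0] at hKf
  refine ⟨fun x ↦ L.derivWeierstrassPExcept 0 x - L.derivWeierstrassP y - 2 * K x + 2 * Z2 x
    + 2 * P1 x - 2 * (x * P1 x - L.weierstrassP y) *
      (-L.weierstrassP y * x + x ^ 2 * K x - x ^ 2 * Z2 x), by fun_prop, ?_⟩
  filter_upwards [self_mem_nhdsWithin] with x hx
  have hx' : x ≠ 0 := hx
  have e1 : Z L x = 1 / x + x * (x * Z2 x) := by
    rw [Z, hZ1f x, hZ2f x]; ring
  have e2 : L.weierstrassP x = 1 / x ^ 2 + x * P1 x := by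
    rw [P_eq, hP1f x]; ring
  have e3 : L.derivWeierstrassP x = L.derivWeierstrassPExcept 0 x - 2 / x ^ 3 := by
    have := L.derivWeierstrassPExcept_sub 0 x
    simpa using this.symm
  simp only [G]
  rw [hHf x, hKf x, e1, e2, e3]
  field_simp
  ring

/-- The addition formula for the Weierstrass zeta function. -/
lemma addition (L : PeriodPair) (x y : ℂ) (hx : x ∉ L.lattice) (hy : y ∉ L.lattice)
    (hxy : x + y ∉ L.lattice) :
    L.derivWeierstrassP x - L.derivWeierstrassP y
      = 2 * (L.weierstrassP x - L.weierstrassP y) * (Z L (x + y) - Z L x - Z L y) := by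
  have ev : ∀ p, ∀ᶠ x in 𝓝[≠] p, x ∉ L.lattice ∧ x + y ∉ L.lattice := fun p ↦
    (eventually_notMem L p).and ((tendsto_add_punct p y).eventually (eventually_notMem L (p + y)))
  have hper : ∀ l ∈ L.lattice, ∀ p, ∀ᶠ x in 𝓝[≠] p, G L y (x + l) = G L y x := by
    intro l hl p
    filter_upwards [ev p] with x hx
    exact G_per L y l hl x hx.1 hx.2
  have transfer : ∀ p l, l ∈ L.lattice →
      (∃ h : ℂ → ℂ, AnalyticAt ℂ h p ∧ G L y =ᶠ[𝓝[≠] p] h) →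
      ∃ h : ℂ → ℂ, AnalyticAt ℂ h (p + l) ∧ G L y =ᶠ[𝓝[≠] (p + l)] h := by
    rintro p l hl ⟨h, hh, hG⟩
    refine ⟨fun x ↦ h (x + -l), ?_, ?_⟩
    · refine AnalyticAt.fun_comp (f := fun x ↦ x + -l) ?_ (by fun_prop)
      simpa using hh
    · have t := tendsto_add_punct (p + l) (-l)
      rw [add_neg_cancel_right] at t
      filter_upwards [t.eventually hG, hper (-l) (neg_mem hl) (p + l)] with x h1 h2
      rw [← h2, h1]
  have hreg : ∀ p, p ∉ L.lattice → p + y ∉ L.lattice → AnalyticAt ℂ (G L y) p := by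
    intro p h1 h2
    have a1 := L.analyticOnNhd_weierstrassP _ h1
    have a2 := L.analyticOnNhd_derivWeierstrassP _ h1
    have a3 := analyticAt_Z L _ h1
    have a4 : AnalyticAt ℂ (fun x ↦ Z L (x + y)) p :=
      AnalyticAt.fun_comp (f := fun x ↦ x + y) (analyticAt_Z L _ h2) (by fun_prop)
    unfold G
    fun_prop
  obtain ⟨h, hh, hG, h0⟩ := G_loc_neg L y hy
  obtain ⟨c, hc⟩ := liouville L (G L y) hper (by
    intro p
    by_cases h1 : p ∈ L.lattice
    · simpa using transfer 0 p h1 (G_loc_zero L y hy)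
    by_cases h2 : p + y ∈ L.lattice
    · simpa using transfer (-y) (p + y) h2 ⟨h, hh, hG⟩
    exact ⟨_, hreg p h1 h2, Filter.EventuallyEq.rfl⟩)
  have hc0 : c = 0 := by
    have t1 : Tendsto h (𝓝[≠] (-y)) (𝓝 (h (-y))) :=
      hh.continuousAt.tendsto.mono_left nhdsWithin_le_nhds
    rw [h0] at t1
    refine tendsto_nhds_unique (tendsto_const_nhds.congr' ?_) t1
    filter_upwards [hG, hc (-y)] with x h1 h2
    rw [← h1, h2]
  have hx0 : G L y x = 0 := by
    have t1 : Tendsto (G L y) (𝓝[≠] x) (𝓝 (G L y x)) :=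
      (hreg x hx hxy).continuousAt.tendsto.mono_left nhdsWithin_le_nhds
    refine tendsto_nhds_unique t1 (tendsto_const_nhds.congr' ?_)
    filter_upwards [hc x] with z hz
    rw [hz, hc0]
  rw [← sub_eq_zero]
  exact hx0

end QAux

namespace QAux
open scoped Topology

/-- The period pair of the frozen lattice. -/
def PP (ℓ δ : ℝ) (hℓ : 0 < ℓ) (hδ : 0 < δ) : PeriodPair where
  ω₁ := 2 * (ℓ : ℂ)
  ω₂ := 2 * ((δ : ℂ) * Complex.I)
  indep := by
    rw [LinearIndependent.pair_iff]
    intro s t h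
    have h1 := congrArg Complex.re h
    have h2 := congrArg Complex.im h
    simp at h1 h2
    exact ⟨h1.resolve_right hℓ.ne', h2.resolve_right hδ.ne'⟩

section link
variable {ℓ δ : ℝ} (hℓ : 0 < ℓ) (hδ : 0 < δ)

lemma mem_PP (z : ℂ) : z ∈ (PP ℓ δ hℓ hδ).lattice ↔ z ∈ Lambda ℓ δ := by
  rw [PeriodPair.mem_lattice]
  simp only [PP, Lambda, Set.mem_ofPred_eq]
  constructor
  · rintro ⟨m, n, h⟩; exact ⟨m, n, by rw [← h]; ring⟩
  · rintro ⟨m, n, h⟩; exact ⟨m, n, by rw [h]; ring⟩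

lemma tsum_link (f : ℂ → ℂ) :
    ∑' ω : latticePts ℓ δ, f ω = ∑' l : (PP ℓ δ hℓ hδ).lattice, if (l : ℂ) = 0 then 0 else f l := by
  rw [tsum_subtype (latticePts ℓ δ) f]
  have := tsum_subtype ((PP ℓ δ hℓ hδ).lattice : Set ℂ) (fun l ↦ if l = 0 then 0 else f l)
  refine Eq.trans ?_ this.symm
  congr 1
  ext z
  by_cases h0 : z = 0
  · simp [latticePts, h0, Set.indicator]
  · have e1 : z ∈ Lambda ℓ δ \ {0} ↔ z ∈ ((PP ℓ δ hℓ hδ).lattice : Set ℂ) := by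
      rw [SetLike.mem_coe, mem_PP]
      exact ⟨fun h ↦ h.1, fun h ↦ ⟨h, h0⟩⟩
    by_cases h : z ∈ ((PP ℓ δ hℓ hδ).lattice : Set ℂ)
    · rw [Set.indicator_of_mem h, Set.indicator_of_mem (show z ∈ latticePts ℓ δ from e1.mpr h),
        if_neg h0]
    · rw [Set.indicator_of_notMem h,
        Set.indicator_of_notMem (show z ∉ latticePts ℓ δ from fun h' ↦ h (e1.mp h'))]

lemma wZeta_eq (z : ℂ) : wZeta ℓ δ z = Z (PP ℓ δ hℓ hδ) z := by
  rw [wZeta, Z, zReg, tsum_link hℓ hδ (fun l ↦ 1 / (z - l) + 1 / l + z / l ^ 2)]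

lemma wP_eq (z : ℂ) : wP ℓ δ z = (PP ℓ δ hℓ hδ).weierstrassP z := by
  rw [wP, P_eq, PeriodPair.weierstrassPExcept, tsum_link hℓ hδ (fun l ↦ 1 / (z - l) ^ 2 - 1 / l ^ 2)]

end link

section linkTwo
variable {ℓ δ : ℝ}

lemma zeta2_neg (hℓ : 0 < ℓ) (hδ : 0 < δ) (z : ℂ) : zeta2 ℓ δ (-z) = -zeta2 ℓ δ z := by
  simp only [zeta2, wZeta_eq hℓ hδ, Z_neg]; ring

lemma zeta2_zero (hℓ : 0 < ℓ) (hδ : 0 < δ) : zeta2 ℓ δ 0 = 0 := by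
  simp only [zeta2, wZeta_eq hℓ hδ, Z_zero]; ring

lemma wp2_neg (hℓ : 0 < ℓ) (hδ : 0 < δ) (z : ℂ) : wp2 ℓ δ (-z) = wp2 ℓ δ z := by
  simp only [wp2, wP_eq hℓ hδ, PeriodPair.weierstrassP_neg]

lemma hasDerivAt_zeta2 (hℓ : 0 < ℓ) (hδ : 0 < δ) (z : ℂ) (hz : z ∉ Lambda ℓ δ) :
    HasDerivAt (zeta2 ℓ δ) (-wp2 ℓ δ z) z := by
  have h1 := hasDerivAt_Z (PP ℓ δ hℓ hδ) z (by rwa [mem_PP])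
  have h2 : HasDerivAt (fun z : ℂ ↦ wZeta ℓ δ ((δ : ℂ) * Complex.I) / ((δ : ℂ) * Complex.I) * z)
      (wZeta ℓ δ ((δ : ℂ) * Complex.I) / ((δ : ℂ) * Complex.I)) z := by
    simpa using (hasDerivAt_id z).const_mul
      (wZeta ℓ δ ((δ : ℂ) * Complex.I) / ((δ : ℂ) * Complex.I))
  have e : zeta2 ℓ δ = fun z ↦ Z (PP ℓ δ hℓ hδ) z
      - wZeta ℓ δ ((δ : ℂ) * Complex.I) / ((δ : ℂ) * Complex.I) * z := by
    ext w; rw [zeta2, ← wZeta_eq hℓ hδ]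
  rw [e]
  refine (h1.sub h2).congr_deriv ?_
  rw [wp2, wP_eq hℓ hδ]; ring

lemma deriv_f2 (hℓ : 0 < ℓ) (hδ : 0 < δ) (z : ℂ) (hz : z ∉ Lambda ℓ δ) :
    deriv (f2 ℓ δ) z = -2 * zeta2 ℓ δ z * wp2 ℓ δ z - (PP ℓ δ hℓ hδ).derivWeierstrassP z := by
  have hz' : z ∉ (PP ℓ δ hℓ hδ).lattice := by rwa [mem_PP]
  have h1 := (hasDerivAt_zeta2 hℓ hδ z hz).pow 2
  have h2 : HasDerivAt (PP ℓ δ hℓ hδ).weierstrassP ((PP ℓ δ hℓ hδ).derivWeierstrassP z) z := by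
    rw [← PeriodPair.deriv_weierstrassP]
    exact ((PP ℓ δ hℓ hδ).analyticOnNhd_weierstrassP z hz').differentiableAt.hasDerivAt
  have h3 := h2.add_const (wZeta ℓ δ ((δ : ℂ) * Complex.I) / ((δ : ℂ) * Complex.I))
  have e : f2 ℓ δ = fun z ↦ zeta2 ℓ δ z ^ 2 - ((PP ℓ δ hℓ hδ).weierstrassP z
      + wZeta ℓ δ ((δ : ℂ) * Complex.I) / ((δ : ℂ) * Complex.I)) := by
    ext w; rw [f2, wp2, wP_eq hℓ hδ]
  rw [e]
  refine ((h1.sub h3).congr_deriv ?_).deriv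
  push_cast
  ring

lemma neg_notMem (hℓ : 0 < ℓ) (hδ : 0 < δ) {z : ℂ} (hz : z ∉ Lambda ℓ δ) : -z ∉ Lambda ℓ δ := by
  rw [← mem_PP hℓ hδ] at hz ⊢
  exact fun h ↦ hz (by simpa using neg_mem h)

lemma deriv_f2_neg (hℓ : 0 < ℓ) (hδ : 0 < δ) (z : ℂ) (hz : z ∉ Lambda ℓ δ) :
    deriv (f2 ℓ δ) (-z) = -deriv (f2 ℓ δ) z := by
  rw [deriv_f2 hℓ hδ z hz, deriv_f2 hℓ hδ _ (neg_notMem hℓ hδ hz), zeta2_neg hℓ hδ,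
    wp2_neg hℓ hδ, PeriodPair.derivWeierstrassP_neg]
  ring

lemma f2_identity (hℓ : 0 < ℓ) (hδ : 0 < δ) (x y : ℂ) (hx : x ∉ Lambda ℓ δ) (hy : y ∉ Lambda ℓ δ)
    (hxy : x + y ∉ Lambda ℓ δ) :
    deriv (f2 ℓ δ) y - deriv (f2 ℓ δ) x
      = 2 * (wp2 ℓ δ y * (zeta2 ℓ δ x - zeta2 ℓ δ (x + y))
        + wp2 ℓ δ x * (zeta2 ℓ δ (x + y) - zeta2 ℓ δ y)) := by
  have := addition (PP ℓ δ hℓ hδ) x y (by rwa [mem_PP]) (by rwa [mem_PP]) (by rwa [mem_PP])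
  rw [deriv_f2 hℓ hδ x hx, deriv_f2 hℓ hδ y hy]
  simp only [zeta2, wp2, wZeta_eq hℓ hδ, wP_eq hℓ hδ]
  linear_combination this

lemma zeta2_per (hℓ : 0 < ℓ) (hδ : 0 < δ) (z : ℂ) (hz : z ∉ Lambda ℓ δ) :
    zeta2 ℓ δ (z + 2 * ((δ : ℂ) * Complex.I)) = zeta2 ℓ δ z := by
  set L := PP ℓ δ hℓ hδ with hL
  set w : ℂ := (δ : ℂ) * Complex.I with hw
  have hw0 : w ≠ 0 := by simp [hw, hδ.ne']
  obtain ⟨c, hc⟩ := Z_quasi L (2 * w) L.ω₂_mem_lattice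
  have hh : w ∉ L.lattice := by
    have := L.ω₂_div_two_notMem_lattice
    have e : L.ω₂ / 2 = w := by simp [hL, PP, hw]
    rwa [e] at this
  have h1 := hc (-w) (fun h ↦ hh (by simpa using neg_mem h))
  have e : -w + 2 * w = w := by ring
  rw [e, Z_neg] at h1
  have h2 := hc z (by rwa [hL, mem_PP])
  simp only [zeta2, wZeta_eq hℓ hδ, ← hw, ← hL]
  rw [h2]
  field_simp
  linear_combination -w * h1

end linkTwo

/-! ### Linear algebra in `ℂ³` -/

lemma dot3_add_left (a b c : Fin 3 → ℂ) : dot3 (a + b) c = dot3 a c + dot3 b c := by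
  simp [dot3]; ring
lemma dot3_sub_right (a b c : Fin 3 → ℂ) : dot3 a (b - c) = dot3 a b - dot3 a c := by
  simp [dot3]; ring
lemma dot3_add_right (a b c : Fin 3 → ℂ) : dot3 a (b + c) = dot3 a b + dot3 a c := by
  simp [dot3]; ring
lemma dot3_neg_left (a b : Fin 3 → ℂ) : dot3 (-a) b = -dot3 a b := by
  simp [dot3]; ring
lemma dot3_neg_right (a b : Fin 3 → ℂ) : dot3 a (-b) = -dot3 a b := by
  simp [dot3]; ring
lemma dot3_smul_left (c : ℂ) (a b : Fin 3 → ℂ) : dot3 (c • a) b = c * dot3 a b := by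
  simp [dot3]; ring
lemma dot3_smul_right (c : ℂ) (a b : Fin 3 → ℂ) : dot3 a (c • b) = c * dot3 a b := by
  simp [dot3]; ring
lemma dot3_sum_left {ι : Type*} (s : Finset ι) (f : ι → Fin 3 → ℂ) (b : Fin 3 → ℂ) :
    dot3 (∑ k ∈ s, f k) b = ∑ k ∈ s, dot3 (f k) b := by
  simp [dot3, Finset.sum_apply, Finset.sum_mul, Finset.sum_add_distrib]
lemma dot3_sum_right {ι : Type*} (s : Finset ι) (f : ι → Fin 3 → ℂ) (b : Fin 3 → ℂ) :
    dot3 b (∑ k ∈ s, f k) = ∑ k ∈ s, dot3 b (f k) := by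
  simp [dot3, Finset.sum_apply, Finset.mul_sum, Finset.sum_add_distrib]
lemma cross3_self (a : Fin 3 → ℂ) : cross3 a a = 0 := by
  ext i; fin_cases i <;> simp [cross3] <;> ring
lemma cross3_anti (a b : Fin 3 → ℂ) : cross3 a b = -cross3 b a := by
  ext i; fin_cases i <;> simp [cross3] <;> ring
lemma cross3_neg_left (a b : Fin 3 → ℂ) : cross3 (-a) b = -cross3 a b := by
  ext i; fin_cases i <;> simp [cross3] <;> ring
lemma cross3_neg_right (a b : Fin 3 → ℂ) : cross3 a (-b) = -cross3 a b := by
  ext i; fin_cases i <;> simp [cross3] <;> ring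
lemma triple_cyc (a b c : Fin 3 → ℂ) : dot3 (cross3 a b) c = dot3 a (cross3 b c) := by
  simp [dot3, cross3]; ring
lemma triple_swap (a b c : Fin 3 → ℂ) : dot3 (cross3 a b) c = -dot3 (cross3 a c) b := by
  simp [dot3, cross3]; ring
lemma triple_swap' (a b c : Fin 3 → ℂ) : dot3 (cross3 a b) c = dot3 (cross3 b c) a := by
  simp [dot3, cross3]; ring
lemma dot3_comm (a b : Fin 3 → ℂ) : dot3 a b = dot3 b a := by
  simp [dot3]; ring

lemma alg_core {ι : Type*} [Fintype ι] (r : ι → ℂ) (u X U : ι → Fin 3 → ℂ) (d : ι → ℂ)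
    (Y Yd : Fin 3 → ℂ) (P Zt F : ι → ι → ℂ)
    (hX : ∀ j, X j = Y - ∑ k, Zt j k • u k)
    (hU : ∀ j, U j = -∑ k, ((r j + r k) * P j k) • cross3 (u j) (u k))
    (hY : Yd = (-(1 / 4) : ℂ) • ∑ j, ∑ k, ((r j + r k) * F j k) • cross3 (u j) (u k))
    (hd : ∀ j, d j • u j = -(r j) • cross3 (u j) (X j))
    (hsum : ∑ j, u j = 0)
    (hPs : ∀ j k, P j k = P k j) (hFa : ∀ j k, j ≠ k → F j k = -F k j)
    (hid : ∀ j k l, j ≠ k → k ≠ l → j ≠ l →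
      F k l - F j k = 2 * (P k l * (Zt j k - Zt j l) + P j k * (Zt j l - Zt k l)))
    (j : ι) :
    dot3 (U j) (X j) + dot3 (u j)
      (Yd - ∑ k, ((-P j k * (d j - d k)) • u k + Zt j k • U k)) = 0 := by
  classical
  set D : ι → ι → ℂ := fun k l ↦ dot3 (u j) (cross3 (u k) (u l)) with hD
  have hDanti : ∀ k l, D k l = -D l k := fun k l ↦ by
    simp only [hD]; rw [cross3_anti, dot3_neg_right]
  have hD1 : ∀ l, D j l = 0 := fun l ↦ by simp [hD, dot3, cross3]; ring
  have hD2 : ∀ l, D l j = 0 := fun l ↦ by rw [hDanti, hD1, neg_zero]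
  have hD3 : ∀ l, D l l = 0 := fun l ↦ by simp only [hD, cross3_self]; simp [dot3]
  have hDsum : ∀ k, ∑ l, D k l = 0 := fun k ↦ by
    have : ∑ l, D k l = dot3 (cross3 (u j) (u k)) (∑ l, u l) := by
      rw [dot3_sum_right]
      exact Finset.sum_congr rfl fun l _ ↦ (triple_cyc _ _ _).symm
    rw [this, hsum]; simp [dot3]
  set W : ι → ι → ℂ := fun k m ↦ dot3 (cross3 (u j) (u k)) (X m) with hW
  have hWd : ∀ k, W k k - W k j = ∑ l, (Zt j l - Zt k l) * D k l := fun k ↦ by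
    simp only [hW, hX, dot3_sub_right, dot3_sum_right, dot3_smul_right, triple_cyc, sub_mul,
      Finset.sum_sub_distrib, hD]
    ring
  have hdj : ∀ k, d j * dot3 (u j) (u k) = r j * W k j := fun k ↦ by
    rw [← dot3_smul_left, hd, dot3_smul_left, hW]
    simp only
    rw [triple_swap (u j) (u k) (X j)]; ring
  have hdk : ∀ k, d k * dot3 (u j) (u k) = -(r k * W k k) := fun k ↦ by
    rw [← dot3_smul_right, hd, dot3_smul_right, hW]
    simp only
    rw [triple_cyc]; ring
  have h1 : dot3 (U j) (X j) = ∑ k, -((r j + r k) * P j k * W k j) := by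
    rw [hU, dot3_neg_left, dot3_sum_left, ← Finset.sum_neg_distrib]
    simp only [dot3_smul_left, hW]
  have h2 : dot3 (u j) Yd = ∑ k, ∑ l, -(1 / 4) * (r k + r l) * F k l * D k l := by
    rw [hY, dot3_smul_right, dot3_sum_right, Finset.mul_sum]
    refine Finset.sum_congr rfl fun k _ ↦ ?_
    rw [dot3_sum_right, Finset.mul_sum]
    refine Finset.sum_congr rfl fun l _ ↦ ?_
    rw [dot3_smul_right]; ring
  have h3 : ∀ k, dot3 (u j) (U k) = ∑ l, -((r k + r l) * P k l * D k l) := fun k ↦ by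
    rw [hU, dot3_neg_right, dot3_sum_right, ← Finset.sum_neg_distrib]
    simp only [dot3_smul_right, hD]
  rw [dot3_sub_right, h1, h2, dot3_sum_right]
  simp only [dot3_add_right, dot3_smul_right]
  have h4 : ∀ k, -((r j + r k) * P j k * W k j)
        - (-P j k * (d j - d k) * dot3 (u j) (u k) + Zt j k * dot3 (u j) (U k))
      = ∑ l, (r k * P j k * (Zt j l - Zt k l) + Zt j k * (r k + r l) * P k l) * D k l := fun k ↦ by
    have : ∑ l, (r k * P j k * (Zt j l - Zt k l) + Zt j k * (r k + r l) * P k l) * D k l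
        = r k * P j k * (W k k - W k j) - Zt j k * dot3 (u j) (U k) := by
      rw [hWd, h3, Finset.mul_sum, Finset.mul_sum, ← Finset.sum_sub_distrib]
      exact Finset.sum_congr rfl fun l _ ↦ by ring
    rw [this]
    linear_combination P j k * hdj k - P j k * hdk k
  have h5 : ∑ k, ∑ l, Zt j k * r l * P k l * D k l
      = ∑ k, ∑ l, -(Zt j l * r k * P k l * D k l) := by
    rw [Finset.sum_comm]
    refine Finset.sum_congr rfl fun k _ ↦ Finset.sum_congr rfl fun l _ ↦ ?_
    rw [hPs l k, hDanti l k]; ring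
  have h6 : ∑ k, ∑ l, r l * F k l * D k l = ∑ k, ∑ l, r k * F k l * D k l := by
    rw [Finset.sum_comm]
    refine Finset.sum_congr rfl fun k _ ↦ Finset.sum_congr rfl fun l _ ↦ ?_
    by_cases e : l = k
    · rw [e]
    · rw [hFa l k e, hDanti l k]; ring
  have h7 : ∑ k, ∑ l, (r k * P j k * (Zt j l - Zt k l) + Zt j k * (r k + r l) * P k l) * D k l
      + ∑ k, ∑ l, -(1 / 4) * (r k + r l) * F k l * D k l
      = ∑ k, ∑ l, r k * (P j k * (Zt j l - Zt k l) + P k l * (Zt j k - Zt j l)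
        - 1 / 2 * F k l) * D k l := by
    have e1 : ∑ k, ∑ l, (r k * P j k * (Zt j l - Zt k l) + Zt j k * (r k + r l) * P k l) * D k l
        = ∑ k, ∑ l, (r k * P j k * (Zt j l - Zt k l) + Zt j k * r k * P k l) * D k l
          + ∑ k, ∑ l, Zt j k * r l * P k l * D k l := by
      simp only [← Finset.sum_add_distrib]
      exact Finset.sum_congr rfl fun k _ ↦ Finset.sum_congr rfl fun l _ ↦ by ring
    have e2 : ∑ k, ∑ l, -(1 / 4) * (r k + r l) * F k l * D k l
        = -(1 / 4) * ∑ k, ∑ l, r k * F k l * D k l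
          + -(1 / 4) * ∑ k, ∑ l, r l * F k l * D k l := by
      simp only [Finset.mul_sum, ← Finset.sum_add_distrib]
      exact Finset.sum_congr rfl fun k _ ↦ Finset.sum_congr rfl fun l _ ↦ by ring
    rw [e1, e2, h5, h6]
    simp only [Finset.mul_sum, ← Finset.sum_add_distrib]
    exact Finset.sum_congr rfl fun k _ ↦ Finset.sum_congr rfl fun l _ ↦ by ring
  have h8 : ∀ k l, r k * (P j k * (Zt j l - Zt k l) + P k l * (Zt j k - Zt j l)
        - 1 / 2 * F k l) * D k l = (-(1 / 2) * r k * F j k) * D k l := fun k l ↦ by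
    by_cases e1 : j = k
    · rw [← e1, hD1]; ring
    by_cases e2 : k = l
    · rw [← e2, hD3]; ring
    by_cases e3 : j = l
    · rw [← e3, hD2]; ring
    linear_combination (-(1 / 2) * r k * D k l) * hid j k l e1 e2 e3
  have h9 : ∑ k, -((r j + r k) * P j k * W k j)
      + (∑ k, ∑ l, -(1 / 4) * (r k + r l) * F k l * D k l
        - ∑ k, (-P j k * (d j - d k) * dot3 (u j) (u k) + Zt j k * dot3 (u j) (U k)))
      = ∑ k, ∑ l, (r k * P j k * (Zt j l - Zt k l) + Zt j k * (r k + r l) * P k l) * D k l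
      + ∑ k, ∑ l, -(1 / 4) * (r k + r l) * F k l * D k l := by
    rw [← Finset.sum_congr rfl fun k _ ↦ h4 k, Finset.sum_sub_distrib]
    ring
  rw [h9, h7]
  refine Finset.sum_eq_zero fun k _ ↦ ?_
  rw [Finset.sum_congr rfl fun l _ ↦ h8 k l, ← Finset.mul_sum, hDsum, mul_zero]

end QAux

namespace QAux

lemma hasDeriv_dot3 {f g : ℝ → Fin 3 → ℂ} {f' g' : Fin 3 → ℂ} {S : Set ℝ} {τ : ℝ}
    (hf : HasDerivWithinAt f f' S τ) (hg : HasDerivWithinAt g g' S τ) :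
    HasDerivWithinAt (fun τ ↦ dot3 (f τ) (g τ)) (dot3 f' (g τ) + dot3 (f τ) g') S τ := by
  rw [hasDerivWithinAt_pi] at hf hg
  have := (((hf 0).mul (hg 0)).add ((hf 1).mul (hg 1))).add ((hf 2).mul (hg 2))
  refine this.congr_deriv ?_
  simp only [dot3]; ring

lemma const_of_deriv_zero {E : Type*} [NormedAddCommGroup E] [NormedSpace ℝ E] {f : ℝ → E} {T : ℝ}
    (hf : ∀ τ ∈ Set.Ico (0 : ℝ) T, HasDerivWithinAt f 0 (Set.Ico (0 : ℝ) T) τ)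
    {x y : ℝ} (hx : x ∈ Set.Ico (0 : ℝ) T) (hy : y ∈ Set.Ico (0 : ℝ) T) : f x = f y := by
  have := (convex_Ico (0 : ℝ) T).norm_image_sub_le_of_norm_hasDerivWithin_le (C := 0) hf
    (fun _ _ ↦ by simp) hx hy
  rw [zero_mul, norm_le_zero_iff, sub_eq_zero] at this
  exact this.symm

theorem core {ι : Type*} [Fintype ι] {ℓ δ : ℝ} (hℓ : 0 < ℓ) (hδ : 0 < δ) {T : ℝ} (hT : 0 < T)
    (φ : ℝ → Fin 3 → ℂ) (r : ι → ℂ) (x : ι → ℝ → ℂ) (u : ι → ℝ → Fin 3 → ℂ) (d : ι → ℝ → ℂ)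
    (hx : ∀ j, ∀ τ ∈ Set.Ico (0:ℝ) T, HasDerivWithinAt (x j) (d j τ) (Set.Ico (0:ℝ) T) τ)
    (hne : ∀ τ ∈ Set.Ico (0:ℝ) T, ∀ j k, j ≠ k → x j τ - x k τ ∉ Lambda ℓ δ)
    (hu : ∀ j, ∀ τ ∈ Set.Ico (0:ℝ) T, HasDerivWithinAt (u j)
      (-∑ k, ((r j + r k) * wp2 ℓ δ (x j τ - x k τ)) • cross3 (u j τ) (u k τ))
      (Set.Ico (0:ℝ) T) τ)
    (hd : ∀ j, ∀ τ ∈ Set.Ico (0:ℝ) T, d j τ • u j τ = -(r j) • cross3 (u j τ)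
      (Complex.I • φ τ - ∑ k, zeta2 ℓ δ (x j τ - x k τ) • u k τ))
    (hφ : ∀ τ ∈ Set.Ico (0:ℝ) T, HasDerivWithinAt φ
      ((Complex.I / 4) • ∑ j, ∑ k,
        ((r j + r k) * deriv (f2 ℓ δ) (x j τ - x k τ)) • cross3 (u j τ) (u k τ))
      (Set.Ico (0:ℝ) T) τ)
    (h0 : ∑ j, u j 0 = 0) (j : ι) (τ₁ : ℝ) (h₁ : τ₁ ∈ Set.Ico (0:ℝ) T)
    (τ₂ : ℝ) (h₂ : τ₂ ∈ Set.Ico (0:ℝ) T) :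
    dot3 (u j τ₁) (Complex.I • φ τ₁ - ∑ k, zeta2 ℓ δ (x j τ₁ - x k τ₁) • u k τ₁)
      = dot3 (u j τ₂) (Complex.I • φ τ₂ - ∑ k, zeta2 ℓ δ (x j τ₂ - x k τ₂) • u k τ₂) := by
  have hPs : ∀ τ j k, wp2 ℓ δ (x j τ - x k τ) = wp2 ℓ δ (x k τ - x j τ) := fun τ j k ↦ by
    rw [← wp2_neg hℓ hδ, neg_sub]
  have hsum : ∀ τ ∈ Set.Ico (0:ℝ) T, ∑ j, u j τ = 0 := by
    intro τ hτ
    rw [← h0]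
    refine const_of_deriv_zero (f := fun τ ↦ ∑ j, u j τ) (T := T) ?_ hτ ⟨le_refl _, hT⟩
    intro τ hτ
    refine (HasDerivWithinAt.fun_sum fun j _ ↦ hu j τ hτ).congr_deriv ?_
    rw [Finset.sum_neg_distrib, neg_eq_zero]
    set S := ∑ j, ∑ k, ((r j + r k) * wp2 ℓ δ (x j τ - x k τ)) • cross3 (u j τ) (u k τ) with hS
    have : S = -S := by
      conv_lhs => rw [hS, Finset.sum_comm]
      rw [hS, ← Finset.sum_neg_distrib]
      refine Finset.sum_congr rfl fun j _ ↦ ?_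
      rw [← Finset.sum_neg_distrib]
      refine Finset.sum_congr rfl fun k _ ↦ ?_
      rw [hPs, cross3_anti, smul_neg, add_comm (r k)]
    exact self_eq_neg.mp this
  have hZ : ∀ τ ∈ Set.Ico (0:ℝ) T, ∀ j k,
      HasDerivWithinAt (fun τ ↦ zeta2 ℓ δ (x j τ - x k τ))
        (-wp2 ℓ δ (x j τ - x k τ) * (d j τ - d k τ)) (Set.Ico (0:ℝ) T) τ := by
    intro τ hτ j k
    by_cases e : j = k
    · subst e
      simp only [sub_self, mul_zero]
      exact hasDerivWithinAt_const _ _ _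
    · exact (hasDerivAt_zeta2 hℓ hδ _ (hne τ hτ j k e)).comp_hasDerivWithinAt τ
        ((hx j τ hτ).sub (hx k τ hτ))
  refine const_of_deriv_zero (T := T)
    (f := fun τ ↦ dot3 (u j τ) (Complex.I • φ τ - ∑ k, zeta2 ℓ δ (x j τ - x k τ) • u k τ))
    ?_ h₁ h₂
  intro τ hτ
  have hX := ((hφ τ hτ).const_smul Complex.I).sub
    (HasDerivWithinAt.fun_sum (u := Finset.univ) fun k _ ↦ (hZ τ hτ j k).smul (hu k τ hτ))
  have key := alg_core r (fun j ↦ u j τ)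
    (fun j ↦ Complex.I • φ τ - ∑ k, zeta2 ℓ δ (x j τ - x k τ) • u k τ)
    (fun j ↦ -∑ k, ((r j + r k) * wp2 ℓ δ (x j τ - x k τ)) • cross3 (u j τ) (u k τ))
    (fun j ↦ d j τ) (Complex.I • φ τ)
    (Complex.I • ((Complex.I / 4) • ∑ j, ∑ k,
        ((r j + r k) * deriv (f2 ℓ δ) (x j τ - x k τ)) • cross3 (u j τ) (u k τ)))
    (fun j k ↦ wp2 ℓ δ (x j τ - x k τ)) (fun j k ↦ zeta2 ℓ δ (x j τ - x k τ))
    (fun j k ↦ deriv (f2 ℓ δ) (x j τ - x k τ))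
    (fun _ ↦ rfl) (fun _ ↦ rfl)
    (by
      rw [smul_smul]
      congr 1
      linear_combination (1 / 4 : ℂ) * Complex.I_mul_I)
    (fun j ↦ hd j τ hτ) (hsum τ hτ) (hPs τ)
    (fun j k hjk ↦ by
      rw [← deriv_f2_neg hℓ hδ _ (hne τ hτ k j (Ne.symm hjk)), neg_sub])
    (fun j k l hjk hkl hjl ↦ by
      have e : x j τ - x l τ = (x j τ - x k τ) + (x k τ - x l τ) := by ring
      rw [e]
      exact f2_identity hℓ hδ _ _ (hne τ hτ j k hjk) (hne τ hτ k l hkl)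
        (by rw [← e]; exact hne τ hτ j l hjl))
    j
  have hX' := hX.congr_deriv (congrArg (fun S ↦ Complex.I • ((Complex.I / 4) • ∑ j, ∑ k,
        ((r j + r k) * deriv (f2 ℓ δ) (x j τ - x k τ)) • cross3 (u j τ) (u k τ)) - S)
        (Finset.sum_congr rfl fun k _ ↦ add_comm _ _))
  exact (hasDeriv_dot3 (hu j τ hτ) hX').congr_deriv key

end QAux

/-- Conservation of the quantities `Q_j` under the first-order system. -/
theorem Q_conserved
    (ℓ δ : ℝ) (hℓ : 0 < ℓ) (hδ : 0 < δ)
    (N M : ℕ) (hN : 1 ≤ N) (hM : 1 ≤ M)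
    (T : ℝ) (hT : 0 < T)
    (φ : ℝ → Fin 3 → ℂ)
    (a : Fin N → ℝ → ℂ) (s : Fin N → ℝ → Fin 3 → ℂ)
    (b : Fin M → ℝ → ℂ) (t : Fin M → ℝ → Fin 3 → ℂ)
    (adot : Fin N → ℝ → ℂ) (bdot : Fin M → ℝ → ℂ)
    -- differentiability of the positions, with derivatives `adot`, `bdot`
    (ha : ∀ j, ∀ τ ∈ Set.Ico (0:ℝ) T, HasDerivWithinAt (a j) (adot j τ) (Set.Ico (0:ℝ) T) τ)
    (hb : ∀ j, ∀ τ ∈ Set.Ico (0:ℝ) T, HasDerivWithinAt (b j) (bdot j τ) (Set.Ico (0:ℝ) T) τ)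
    -- nondegeneracy: differences of poles avoid the lattice
    (haa : ∀ τ ∈ Set.Ico (0:ℝ) T, ∀ j k : Fin N, j ≠ k → a j τ - a k τ ∉ Lambda ℓ δ)
    (hbb : ∀ τ ∈ Set.Ico (0:ℝ) T, ∀ j k : Fin M, j ≠ k → b j τ - b k τ ∉ Lambda ℓ δ)
    (hab : ∀ τ ∈ Set.Ico (0:ℝ) T, ∀ (j : Fin N) (k : Fin M),
      a j τ - b k τ + (δ : ℂ) * Complex.I ∉ Lambda ℓ δ)
    -- the first-order system: spin equations
    (hsdot : ∀ j, ∀ τ ∈ Set.Ico (0:ℝ) T, HasDerivWithinAt (s j)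
      ((-2 : ℂ) • ∑ k ∈ Finset.univ.erase j, wp2 ℓ δ (a j τ - a k τ) • cross3 (s j τ) (s k τ))
      (Set.Ico (0:ℝ) T) τ)
    (htdot : ∀ j, ∀ τ ∈ Set.Ico (0:ℝ) T, HasDerivWithinAt (t j)
      ((-2 : ℂ) • ∑ k ∈ Finset.univ.erase j, wp2 ℓ δ (b j τ - b k τ) • cross3 (t j τ) (t k τ))
      (Set.Ico (0:ℝ) T) τ)
    -- the first-order system: pole equations
    (hadot : ∀ j, ∀ τ ∈ Set.Ico (0:ℝ) T,
      adot j τ • s j τ = -cross3 (s j τ)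
        (Complex.I • φ τ - ∑ k ∈ Finset.univ.erase j, zeta2 ℓ δ (a j τ - a k τ) • s k τ
          + ∑ k : Fin M, zeta2 ℓ δ (a j τ - b k τ + (δ : ℂ) * Complex.I) • t k τ))
    (hbdot : ∀ j, ∀ τ ∈ Set.Ico (0:ℝ) T,
      bdot j τ • t j τ = cross3 (t j τ)
        (Complex.I • φ τ + ∑ k ∈ Finset.univ.erase j, zeta2 ℓ δ (b j τ - b k τ) • t k τ
          - ∑ k : Fin N, zeta2 ℓ δ (b j τ - a k τ + (δ : ℂ) * Complex.I) • s k τ))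
    -- the first-order system: background equation
    (hφdot : ∀ τ ∈ Set.Ico (0:ℝ) T, HasDerivWithinAt φ
      ((Complex.I / 2) • ∑ j : Fin N, ∑ k ∈ Finset.univ.erase j,
          deriv (f2 ℓ δ) (a j τ - a k τ) • cross3 (s j τ) (s k τ)
        - (Complex.I / 2) • ∑ j : Fin M, ∑ k ∈ Finset.univ.erase j,
          deriv (f2 ℓ δ) (b j τ - b k τ) • cross3 (t j τ) (t k τ))
      (Set.Ico (0:ℝ) T) τ)
    (hC3 : (∑ j : Fin N, s j 0) - ∑ j : Fin M, t j 0 = 0) :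
    (∀ j : Fin N, ∀ τ₁ ∈ Set.Ico (0:ℝ) T, ∀ τ₂ ∈ Set.Ico (0:ℝ) T,
      dot3 (s j τ₁)
        (Complex.I • φ τ₁ - ∑ k ∈ Finset.univ.erase j, zeta2 ℓ δ (a j τ₁ - a k τ₁) • s k τ₁
          + ∑ k : Fin M, zeta2 ℓ δ (a j τ₁ - b k τ₁ + (δ : ℂ) * Complex.I) • t k τ₁)
      = dot3 (s j τ₂)
        (Complex.I • φ τ₂ - ∑ k ∈ Finset.univ.erase j, zeta2 ℓ δ (a j τ₂ - a k τ₂) • s k τ₂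
          + ∑ k : Fin M, zeta2 ℓ δ (a j τ₂ - b k τ₂ + (δ : ℂ) * Complex.I) • t k τ₂)) ∧
    (∀ j : Fin M, ∀ τ₁ ∈ Set.Ico (0:ℝ) T, ∀ τ₂ ∈ Set.Ico (0:ℝ) T,
      dot3 (t j τ₁)
        (Complex.I • φ τ₁ + ∑ k ∈ Finset.univ.erase j, zeta2 ℓ δ (b j τ₁ - b k τ₁) • t k τ₁
          - ∑ k : Fin N, zeta2 ℓ δ (b j τ₁ - a k τ₁ + (δ : ℂ) * Complex.I) • s k τ₁)
      = dot3 (t j τ₂)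
        (Complex.I • φ τ₂ + ∑ k ∈ Finset.univ.erase j, zeta2 ℓ δ (b j τ₂ - b k τ₂) • t k τ₂
          - ∑ k : Fin N, zeta2 ℓ δ (b j τ₂ - a k τ₂ + (δ : ℂ) * Complex.I) • s k τ₂)) := by
  set w : ℂ := (δ : ℂ) * Complex.I with hw
  set x : Fin N ⊕ Fin M → ℝ → ℂ := Sum.elim a (fun k τ ↦ b k τ - w) with hxdef
  set u : Fin N ⊕ Fin M → ℝ → Fin 3 → ℂ := Sum.elim s (fun k τ ↦ -t k τ) with hudef
  set r : Fin N ⊕ Fin M → ℂ := Sum.elim (fun _ ↦ 1) (fun _ ↦ -1) with hrdef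
  set d : Fin N ⊕ Fin M → ℝ → ℂ := Sum.elim adot bdot with hddef
  have exab : ∀ (j : Fin N) (k : Fin M) τ, a j τ - (b k τ - w) = a j τ - b k τ + w :=
    fun j k τ ↦ by ring
  have exbb : ∀ (j k : Fin M) τ, b j τ - w - (b k τ - w) = b j τ - b k τ := fun j k τ ↦ by ring
  have hab' : ∀ τ ∈ Set.Ico (0:ℝ) T, ∀ (j : Fin M) (k : Fin N),
      b j τ - w - a k τ ∉ Lambda ℓ δ := fun τ hτ j k ↦ by
    have := QAux.neg_notMem hℓ hδ (hab τ hτ k j)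
    have e : b j τ - w - a k τ = -(a k τ - b j τ + w) := by ring
    rwa [e]
  have hzba : ∀ τ ∈ Set.Ico (0:ℝ) T, ∀ (j : Fin M) (k : Fin N),
      zeta2 ℓ δ (b j τ - w - a k τ) = zeta2 ℓ δ (b j τ - a k τ + w) := fun τ hτ j k ↦ by
    rw [← QAux.zeta2_per hℓ hδ _ (hab' τ hτ j k)]
    congr 1
    ring
  have hz0 := QAux.zeta2_zero hℓ hδ
  have hXa : ∀ (j : Fin N) τ,
      Complex.I • φ τ - ∑ k, zeta2 ℓ δ (x (Sum.inl j) τ - x k τ) • u k τ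
      = Complex.I • φ τ - ∑ k ∈ Finset.univ.erase j, zeta2 ℓ δ (a j τ - a k τ) • s k τ
          + ∑ k : Fin M, zeta2 ℓ δ (a j τ - b k τ + w) • t k τ := fun j τ ↦ by
    rw [Fintype.sum_sum_type, Finset.sum_erase _ (by rw [sub_self, hz0, zero_smul])]
    simp only [hxdef, hudef, Sum.elim_inl, Sum.elim_inr, exab, smul_neg, Finset.sum_neg_distrib]
    abel
  have hXb : ∀ (j : Fin M), ∀ τ ∈ Set.Ico (0:ℝ) T,
      Complex.I • φ τ - ∑ k, zeta2 ℓ δ (x (Sum.inr j) τ - x k τ) • u k τ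
      = Complex.I • φ τ + ∑ k ∈ Finset.univ.erase j, zeta2 ℓ δ (b j τ - b k τ) • t k τ
          - ∑ k : Fin N, zeta2 ℓ δ (b j τ - a k τ + w) • s k τ := fun j τ hτ ↦ by
    rw [Fintype.sum_sum_type, Finset.sum_erase _ (by rw [sub_self, hz0, zero_smul])]
    simp only [hxdef, hudef, Sum.elim_inl, Sum.elim_inr, exbb, hzba τ hτ, smul_neg,
      Finset.sum_neg_distrib]
    abel
  have main := QAux.core hℓ hδ hT φ r x u d
    (by
      rintro (j | j) τ hτ
      · exact ha j τ hτ
      · exact (hb j τ hτ).sub_const w)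
    (by
      rintro τ hτ (j | j) (k | k) hjk
      · exact haa τ hτ j k (fun e ↦ hjk (by rw [e]))
      · simp only [hxdef, Sum.elim_inl, Sum.elim_inr, exab]
        exact hab τ hτ j k
      · exact hab' τ hτ j k
      · simp only [hxdef, Sum.elim_inr, exbb]
        exact hbb τ hτ j k (fun e ↦ hjk (by rw [e])))
    (by
      rintro (j | j) τ hτ
      · refine (hsdot j τ hτ).congr_deriv ?_
        rw [Finset.sum_erase _ (by rw [QAux.cross3_self, smul_zero]), Fintype.sum_sum_type]
        simp only [hxdef, hudef, hrdef, Sum.elim_inl, Sum.elim_inr, add_neg_cancel, zero_mul,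
          zero_smul, Finset.sum_const_zero, add_zero, mul_smul, ← Finset.smul_sum]
        rw [← neg_smul]
        norm_num
      · refine (htdot j τ hτ).neg.congr_deriv ?_
        rw [Finset.sum_erase _ (by rw [QAux.cross3_self, smul_zero]), Fintype.sum_sum_type]
        simp only [hxdef, hudef, hrdef, Sum.elim_inl, Sum.elim_inr, neg_add_cancel, zero_mul,
          zero_smul, Finset.sum_const_zero, zero_add, mul_smul, ← Finset.smul_sum, exbb,
          QAux.cross3_neg_left, QAux.cross3_neg_right, neg_neg]
        rw [← neg_smul, ← neg_smul]
        norm_num)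
    (by
      rintro (j | j) τ hτ
      · rw [hXa]
        simp only [hudef, hrdef, hddef, Sum.elim_inl]
        rw [hadot j τ hτ, neg_one_smul]
      · rw [hXb j τ hτ]
        simp only [hudef, hrdef, hddef, Sum.elim_inr]
        rw [smul_neg, hbdot j τ hτ, neg_neg, one_smul, QAux.cross3_neg_left])
    (by
      intro τ hτ
      refine (hφdot τ hτ).congr_deriv ?_
      have e1 : ∀ j : Fin N, ∑ k ∈ Finset.univ.erase j,
          deriv (f2 ℓ δ) (a j τ - a k τ) • cross3 (s j τ) (s k τ)
          = ∑ k, deriv (f2 ℓ δ) (a j τ - a k τ) • cross3 (s j τ) (s k τ) := fun j ↦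
        Finset.sum_erase _ (by rw [QAux.cross3_self, smul_zero])
      have e2 : ∀ j : Fin M, ∑ k ∈ Finset.univ.erase j,
          deriv (f2 ℓ δ) (b j τ - b k τ) • cross3 (t j τ) (t k τ)
          = ∑ k, deriv (f2 ℓ δ) (b j τ - b k τ) • cross3 (t j τ) (t k τ) := fun j ↦
        Finset.sum_erase _ (by rw [QAux.cross3_self, smul_zero])
      simp only [e1, e2, Fintype.sum_sum_type]
      simp only [hxdef, hudef, hrdef, Sum.elim_inl, Sum.elim_inr, neg_add_cancel, add_neg_cancel,
        zero_mul, zero_smul, Finset.sum_const_zero, zero_add, add_zero, mul_smul,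
        ← Finset.smul_sum, exbb, QAux.cross3_neg_left, QAux.cross3_neg_right, neg_neg]
      rw [smul_add, smul_smul, smul_smul, sub_eq_add_neg, ← neg_smul]
      congr 2 <;> ring)
    (by
      rw [Fintype.sum_sum_type, ← hC3]
      simp only [hudef, Sum.elim_inl, Sum.elim_inr, Finset.sum_neg_distrib]
      rw [sub_eq_add_neg])
  constructor
  · intro j τ₁ h₁ τ₂ h₂
    have := main (Sum.inl j) τ₁ h₁ τ₂ h₂
    rw [hXa, hXa] at this
    exact this
  · intro j τ₁ h₁ τ₂ h₂
    have := main (Sum.inr j) τ₁ h₁ τ₂ h₂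
    rw [hXb j τ₁ h₁, hXb j τ₂ h₂] at this
    simp only [hudef, Sum.elim_inr, QAux.dot3_neg_left] at this
    exact neg_injective this

end
end

section
/- Let N, M ≥ 1 be integers and T > 0. Suppose φ : [0,T) → ℂ³, a_j : [0,T) → ℂ, s_j : [0,T) → ℂ³ (j = 1,…,N) and b_j : [0,T) → ℂ, t_j : [0,T) → ℂ³ (j = 1,…,M) are differentiable, satisfy a_j − a_k ∉ Λ and b_j − b_k ∉ Λ for j ≠ k and a_j − b_k + iδ ∉ Λ for all j, k on [0,T), solve on [0,T) the first-order system: ṡ_j = −2Σ_{k≠j} (s_j∧s_k) ℘₂(a_j−a_k); ṫ_j = −2Σ_{k≠j} (t_j∧t_k) ℘₂(b_j−b_k); s_j ȧ_j = −s_j∧(iφ − Σ_{k≠j} s_k ζ₂(a_j−a_k) + Σ_{k=1}^{M} t_k ζ₂(a_j−b_k+iδ)); t_j ḃ_j = +t_j∧(iφ + Σ_{k≠j} t_k ζ₂(b_j−b_k) − Σ_{k=1}^{N} s_k ζ₂(b_j−a_k+iδ)); φ̇ = (i/2)Σ_{j=1}^{N}Σ_{k≠j} (s_j∧s_k) f₂′(a_j−a_k)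 − (i/2)Σ_{j=1}^{M}Σ_{k≠j} (t_j∧t_k) f₂′(b_j−b_k), and satisfy Σ_{j=1}^{N} s_j(0) − Σ_{j=1}^{M} t_j(0) = 0 and s_j(0)² = 0 (j ≤ N), t_j(0)² = 0 (j ≤ M). Then the quantity R(t) = φ² − (1/2)Σ_{j=1}^{N}Σ_{k≠j} s_j·s_k f₂(a_j−a_k) − (1/2)Σ_{j=1}^{M}Σ_{k≠j} t_j·t_k f₂(b_j−b_k) + Σ_{j=1}^{N}Σ_{k=1}^{M} s_j·t_k f₂(a_j−b_k+iδ) is constant on [0,T). -/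
open Complex Filter MeasureTheory Finset

noncomputable section

section WeierstrassAux

open Topology

variable (L : PeriodPair)

/-- Regular part at the origin of the Weierstrass zeta function of `L`. -/
def zetaEx (z : ℂ) : ℂ :=
  ∑' l : L.lattice, if l.1 = 0 then 0 else (1 / (z - l) + 1 / l + z / (l : ℂ) ^ 2)

/-- Weierstrass zeta function of a period pair. -/
def zetaL (z : ℂ) : ℂ := 1 / z + zetaEx L z

lemma zeta_bound (r : ℝ) (hr : 0 < r) (s : ℂ) (hs : ‖s‖ < r) (l : ℂ) (h : 2 * r ≤ ‖l‖) :
    ‖1 / (s - l) + 1 / l + s / l ^ 2‖ ≤ 2 * r ^ 2 * ‖l‖ ^ (-3 : ℝ) := by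
  have h1 : s ≠ l := by rintro rfl; linarith
  have h2 : 0 < ‖l‖ := by linarith
  have h3 : l ≠ 0 := norm_pos_iff.mp h2
  have h4 : s - l ≠ 0 := sub_ne_zero.mpr h1
  have e : 1 / (s - l) + 1 / l + s / l ^ 2 = s ^ 2 / (l ^ 2 * (s - l)) := by
    field_simp
    ring
  have h5 : ‖l‖ / 2 ≤ ‖s - l‖ := by
    rw [norm_sub_rev]
    exact .trans (by linarith) (norm_sub_norm_le l s)
  rw [e]
  calc ‖s ^ 2 / (l ^ 2 * (s - l))‖ = ‖s‖ ^ 2 / (‖l‖ ^ 2 * ‖s - l‖) := by simp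
    _ ≤ r ^ 2 / (‖l‖ ^ 2 * (‖l‖ / 2)) := by gcongr
    _ = 2 * r ^ 2 / ‖l‖ ^ 3 := by field_simp
    _ = _ := by norm_cast

lemma hasSumLocallyUniformly_zetaEx :
    HasSumLocallyUniformly
      (fun (l : L.lattice) (z : ℂ) ↦
        if l.1 = 0 then 0 else (1 / (z - l) + 1 / l + z / (l : ℂ) ^ 2)) (zetaEx L) := by
  refine L.hasSumLocallyUniformly_aux (u := fun r l => 2 * r ^ 2 * ‖l‖ ^ (-3 : ℝ)) _
    (fun _ _ ↦ (ZLattice.summable_norm_rpow _ _ (by simp; norm_num)).mul_left _) fun r hr ↦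
    Filter.eventually_atTop.mpr ⟨2 * r, ?_⟩
  rintro _ h s hs l rfl
  split_ifs
  · rw [norm_zero]; positivity
  · exact zeta_bound r hr s hs l h

lemma zeta_term_hasDerivAt (l : L.lattice) (x : ℂ) (hx : x ∈ ((L.lattice : Set ℂ) \ {0})ᶜ) :
    HasDerivAt (fun z : ℂ => if l.1 = 0 then 0 else (1 / (z - l) + 1 / l + z / (l : ℂ) ^ 2))
      (if l.1 = 0 then 0 else -(1 / (x - l) ^ 2 - 1 / (l : ℂ) ^ 2)) x := by
  split_ifs with h
  · exact hasDerivAt_const _ _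
  · have h1 : x - l ≠ 0 := by
      intro e
      rw [sub_eq_zero] at e
      subst e
      exact hx ⟨l.2, h⟩
    have := (((hasDerivAt_const x (1:ℂ)).div ((hasDerivAt_id x).sub_const (l:ℂ)) h1).add_const
      (1 / (l:ℂ))).add ((hasDerivAt_id x).div_const ((l:ℂ)^2))
    refine this.congr_deriv ?_
    simp only [id]
    field_simp
    ring

lemma zetaEx_hasDerivAt (x : ℂ) (hx : x ∈ ((L.lattice : Set ℂ) \ {0})ᶜ) :
    HasDerivAt (zetaEx L) (-L.weierstrassPExcept 0 x) x := by
  have hd : DifferentiableOn ℂ (zetaEx L) ((L.lattice : Set ℂ) \ {0})ᶜ := by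
    refine (hasSumLocallyUniformly_zetaEx L).hasSumLocallyUniformlyOn.differentiableOn
      (.of_forall fun s ↦ .fun_sum fun i hi ↦ ?_) L.isOpen_compl_lattice_sdiff
    intro y hy
    exact (zeta_term_hasDerivAt L i y hy).differentiableAt.differentiableWithinAt
  have hD : Set.EqOn (deriv (zetaEx L)) (fun z => -L.weierstrassPExcept 0 z)
      ((L.lattice : Set ℂ) \ {0})ᶜ := by
    refine ((hasSumLocallyUniformly_zetaEx L).tendstoLocallyUniformlyOn.deriv
      (.of_forall fun s ↦ ?_) L.isOpen_compl_lattice_sdiff).unique ?_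
    · refine .fun_sum fun i hi ↦ ?_
      intro y hy
      exact (zeta_term_hasDerivAt L i y hy).differentiableAt.differentiableWithinAt
    · refine ((L.hasSumLocallyUniformly_weierstrassPExcept 0).tendstoLocallyUniformlyOn.neg).congr ?_
      intro s y hy
      simp only [Function.comp_apply, Pi.neg_apply]
      rw [deriv_fun_sum fun i _ => (zeta_term_hasDerivAt L i y hy).differentiableAt]
      rw [← Finset.sum_neg_distrib]
      refine Finset.sum_congr rfl fun i _ => ?_
      rw [(zeta_term_hasDerivAt L i y hy).deriv]
      split_ifs <;> simp
  have := (hd.differentiableAt (L.isOpen_compl_lattice_sdiff.mem_nhds hx)).hasDerivAt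
  rwa [hD hx] at this

lemma zetaEx_neg (z : ℂ) : zetaEx L (-z) = -zetaEx L z := by
  simp only [zetaEx]
  rw [← (Equiv.neg L.lattice).tsum_eq, ← tsum_neg]
  congr 1
  ext l
  simp only [Equiv.neg_apply, NegMemClass.coe_neg, neg_eq_zero]
  split_ifs
  · simp
  · rw [show -z - -(l:ℂ) = -(z - l) by ring, div_neg, div_neg, neg_sq]
    ring

lemma zetaL_neg (z : ℂ) : zetaL L (-z) = -zetaL L z := by
  simp only [zetaL, zetaEx_neg, div_neg]; ring

lemma wpL_eq (z : ℂ) : L.weierstrassP z = 1 / z ^ 2 + L.weierstrassPExcept 0 z := by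
  have := L.weierstrassPExcept_add 0 z
  simp at this
  rw [← this]; simp; ring

lemma zetaL_hasDerivAt (x : ℂ) (hx : x ∉ L.lattice) :
    HasDerivAt (zetaL L) (-L.weierstrassP x) x := by
  have h0 : x ≠ 0 := by rintro rfl; exact hx (zero_mem _)
  have := ((hasDerivAt_inv h0)).add (zetaEx_hasDerivAt L x (fun h => hx h.1))
  rw [wpL_eq]
  refine (this.congr_deriv (by ring)).congr_of_eventuallyEq (.of_forall fun z => ?_)
  simp [zetaL]

lemma wpL_hasDerivAt (x : ℂ) (hx : x ∉ L.lattice) :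
    HasDerivAt L.weierstrassP (deriv L.weierstrassP x) x :=
  (L.analyticOnNhd_weierstrassP x hx).differentiableAt.hasDerivAt

lemma zetaL_quasi (l : L.lattice) : ∃ η : ℂ, ∀ z, z ∉ L.lattice →
    zetaL L (z + l) = zetaL L z + η := by
  have hc : IsPreconnected ((L.lattice : Set ℂ)ᶜ) := by
    refine (Set.Countable.isConnected_compl_of_one_lt_rank (by simp) ?_).2
    exact (countable_of_Lindelof_of_discrete (X := L.lattice))
  have hd : ∀ z ∈ ((L.lattice : Set ℂ)ᶜ),
      HasDerivAt (fun z => zetaL L (z + l) - zetaL L z) 0 z := by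
    intro z hz
    have hz' : z + l ∉ L.lattice := fun h => hz (by simpa using sub_mem h l.2)
    have h1 := (zetaL_hasDerivAt L (z + l) hz').comp_add_const z (l : ℂ)
    refine (h1.sub (zetaL_hasDerivAt L z hz)).congr_deriv ?_
    simp
  obtain ⟨η, h⟩ := L.isClosed_lattice.isOpen_compl.exists_is_const_of_deriv_eq_zero hc
    (fun z hz => (hd z hz).differentiableAt.differentiableWithinAt) (fun z hz => (hd z hz).deriv)
  exact ⟨η, fun z hz => by rw [← h z hz]; ring⟩

/-- The defect in the quadratic zeta identity. -/
def Hdef (y x : ℂ) : ℂ :=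
  (zetaL L x + zetaL L y - zetaL L (x + y)) ^ 2
    - L.weierstrassP x - L.weierstrassP y - L.weierstrassP (x + y)

lemma Hdef_tendsto (y : ℂ) (hy : y ∉ L.lattice) :
    Tendsto (Hdef L y) (𝓝[≠] 0) (𝓝 0) := by
  have h0m : (0:ℂ) ∈ ((L.lattice : Set ℂ) \ {0})ᶜ := by simp
  -- the regular part
  set g : ℂ → ℂ := fun x => zetaEx L x + zetaL L y - zetaL L (x + y) with hg
  have hg0 : g 0 = 0 := by
    have : zetaEx L 0 = 0 := by
      have := zetaEx_neg L 0
      rw [neg_zero] at this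
      exact self_eq_neg.mp this
    simp [hg, this]
  have hgd : HasDerivAt g (L.weierstrassP y) 0 := by
    have h1 := zetaEx_hasDerivAt L 0 h0m
    have h2 := (zetaL_hasDerivAt L (0 + y) (by simpa using hy)).comp_add_const 0 y
    refine ((h1.add_const (zetaL L y)).sub h2).congr_deriv ?_
    simp
  have hP : ContinuousAt (L.weierstrassPExcept 0) 0 :=
    (L.analyticAt_weierstrassPExcept 0).continuousAt
  have hPy : ContinuousAt (fun x => L.weierstrassP (x + y)) 0 := by
    have := (wpL_hasDerivAt L (0 + y) (by simpa using hy)).comp_add_const 0 y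
    exact this.continuousAt
  have hs : Tendsto (fun x => 2 * slope g 0 x + g x ^ 2 - L.weierstrassPExcept 0 x
      - L.weierstrassP y - L.weierstrassP (x + y)) (𝓝[≠] 0)
      (𝓝 (2 * L.weierstrassP y + g 0 ^ 2 - L.weierstrassPExcept 0 0 - L.weierstrassP y
        - L.weierstrassP (0 + y))) := by
    have t1 := hgd.tendsto_slope
    have t2 : Tendsto g (𝓝[≠] 0) (𝓝 (g 0)) := hgd.continuousAt.tendsto.mono_left nhdsWithin_le_nhds
    have t3 := hP.tendsto.mono_left (nhdsWithin_le_nhds (s := {0}ᶜ))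
    have t4 := hPy.tendsto.mono_left (nhdsWithin_le_nhds (s := {0}ᶜ))
    exact ((((t1.const_mul 2).add (t2.pow 2)).sub t3).sub_const _).sub t4
  have e0 : 2 * L.weierstrassP y + g 0 ^ 2 - L.weierstrassPExcept 0 0 - L.weierstrassP y
        - L.weierstrassP (0 + y) = 0 := by
    rw [hg0, L.weierstrassPExcept_zero, zero_add]; ring
  rw [e0] at hs
  refine hs.congr' ?_
  filter_upwards [self_mem_nhdsWithin] with x hx
  have hx : x ≠ 0 := hx
  rw [Hdef, wpL_eq L x, slope_def_field, hg0]
  have : zetaL L x + zetaL L y - zetaL L (x + y) = 1 / x + g x := by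
    simp only [zetaL, hg]; ring
  rw [this]
  field_simp
  ring

lemma Hdef_periodic (y x : ℂ) (hx : x ∉ L.lattice) (hxy : x + y ∉ L.lattice) (l : L.lattice) :
    Hdef L y (x + l) = Hdef L y x := by
  obtain ⟨η, h⟩ := zetaL_quasi L l
  simp only [Hdef]
  rw [show x + (l:ℂ) + y = x + y + l by ring, h x hx, h _ hxy, L.weierstrassP_add_coe,
    L.weierstrassP_add_coe]
  ring

lemma Hdef_symm (y x : ℂ) : Hdef L y (-x - y) = Hdef L y x := by
  simp only [Hdef]
  rw [show -x - y = -(x + y) by ring, show -(x+y)+y = -x by ring, zetaL_neg, zetaL_neg,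
    L.weierstrassP_neg, L.weierstrassP_neg]
  ring

open Classical in
/-- Extension of the defect by zero over the singular points. -/
def Hext (y x : ℂ) : ℂ := if x ∈ L.lattice ∨ x + y ∈ L.lattice then 0 else Hdef L y x

lemma Hext_periodic (y x : ℂ) (l : L.lattice) : Hext L y (x + l) = Hext L y x := by
  have h1 : ∀ z : ℂ, z + l ∈ L.lattice ↔ z ∈ L.lattice := fun z =>
    ⟨fun h => by simpa using sub_mem h l.2, fun h => add_mem h l.2⟩
  simp only [Hext]
  rw [show x + (l:ℂ) + y = x + y + l by ring, h1, h1]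
  split_ifs with h
  · rfl
  · push Not at h
    exact Hdef_periodic L y x h.1 h.2 l

lemma Hext_symm (y x : ℂ) : Hext L y (-x - y) = Hext L y x := by
  have h1 : ∀ z : ℂ, -z ∈ L.lattice ↔ z ∈ L.lattice := fun z => neg_mem_iff
  have hiff : (-x - y ∈ L.lattice ∨ -x - y + y ∈ L.lattice)
      ↔ (x ∈ L.lattice ∨ x + y ∈ L.lattice) := by
    rw [show -x - y = -(x + y) by ring, show -(x+y)+y = -x by ring, h1, h1, or_comm]
  unfold Hext
  rw [Hdef_symm]
  by_cases h : x ∈ L.lattice ∨ x + y ∈ L.lattice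
  · rw [if_pos h, if_pos (hiff.mpr h)]
  · rw [if_neg h, if_neg (fun h' => h (hiff.mp h'))]

lemma Hdef_diff (y x : ℂ) (hx : x ∉ L.lattice) (hxy : x + y ∉ L.lattice) :
    DifferentiableAt ℂ (Hdef L y) x := by
  have a1 := (zetaL_hasDerivAt L x hx).differentiableAt
  have a2 := ((zetaL_hasDerivAt L _ hxy).comp_add_const x y).differentiableAt
  have a3 := (wpL_hasDerivAt L x hx).differentiableAt
  have a4 := ((wpL_hasDerivAt L _ hxy).comp_add_const x y).differentiableAt
  unfold Hdef
  fun_prop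

lemma Hext_diff_reg (y x : ℂ) (hx : x ∉ L.lattice) (hxy : x + y ∉ L.lattice) :
    DifferentiableAt ℂ (Hext L y) x := by
  refine (Hdef_diff L y x hx hxy).congr_of_eventuallyEq ?_
  have o1 := L.isClosed_lattice.isOpen_compl.mem_nhds hx
  have o2 : ∀ᶠ z in 𝓝 x, z + y ∈ (L.lattice : Set ℂ)ᶜ :=
    (continuousAt_id.add continuousAt_const).eventually
      (L.isClosed_lattice.isOpen_compl.mem_nhds hxy)
  filter_upwards [o1, o2] with z h1 h2
  have h1 : z ∉ L.lattice := h1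
  have h2 : z + y ∉ L.lattice := h2
  simp [Hext, h1, h2]

lemma Hext_diff_zero (y : ℂ) (hy : y ∉ L.lattice) : DifferentiableAt ℂ (Hext L y) 0 := by
  have o1 : ∀ᶠ z in 𝓝[≠] (0:ℂ), z ∉ L.lattice := by
    have := L.compl_lattice_sdiff_singleton_mem_nhds 0
    filter_upwards [mem_nhdsWithin_of_mem_nhds this, self_mem_nhdsWithin] with z h1 h2 h3
    exact h1 ⟨h3, h2⟩
  have o2 : ∀ᶠ z in 𝓝[≠] (0:ℂ), z + y ∉ L.lattice := by
    have : ∀ᶠ z in 𝓝 (0:ℂ), z + y ∈ (L.lattice : Set ℂ)ᶜ :=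
      (continuousAt_id.add continuousAt_const).eventually
        (L.isClosed_lattice.isOpen_compl.mem_nhds (by simpa using hy))
    exact mem_nhdsWithin_of_mem_nhds this
  refine (Complex.analyticAt_of_differentiable_on_punctured_nhds_of_continuousAt
    ?_ ?_).differentiableAt
  · filter_upwards [o1, o2] with z h1 h2
    exact Hext_diff_reg L y z h1 h2
  · rw [continuousAt_iff_punctured_nhds]
    have : Hext L y 0 = 0 := by simp [Hext]
    rw [this]
    refine (Hdef_tendsto L y hy).congr' ?_
    filter_upwards [o1, o2] with z h1 h2
    simp [Hext, h1, h2]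

lemma Hext_diff (y : ℂ) (hy : y ∉ L.lattice) : Differentiable ℂ (Hext L y) := by
  have hA : ∀ x ∈ L.lattice, DifferentiableAt ℂ (Hext L y) x := by
    intro x hx
    have e : Hext L y = fun z => Hext L y (z - x) := by
      ext z
      have := Hext_periodic L y (z - x) ⟨x, hx⟩
      simpa using this
    rw [e]
    have h0 := Hext_diff_zero L y hy
    rw [← sub_self x] at h0
    exact h0.comp (f := fun z => z - x) x (by fun_prop)
  intro x
  by_cases hx : x ∈ L.lattice
  · exact hA x hx
  by_cases hxy : x + y ∈ L.lattice
  · have e : Hext L y = fun z => Hext L y (-z - y) := by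
      ext z; rw [Hext_symm]
    rw [e]
    have h0 := hA (-x - y) (by rw [show -x - y = -(x+y) by ring]; exact neg_mem hxy)
    exact h0.comp (f := fun z => -z - y) x (by fun_prop)
  · exact Hext_diff_reg L y x hx hxy

lemma zeta_identity (x y : ℂ) (hx : x ∉ L.lattice) (hy : y ∉ L.lattice)
    (hxy : x + y ∉ L.lattice) :
    (zetaL L x + zetaL L y - zetaL L (x + y)) ^ 2
      = L.weierstrassP x + L.weierstrassP y + L.weierstrassP (x + y) := by
  have hd := Hext_diff L y hy
  have := hd.apply_eq_apply_of_bounded (IsZLattice.isCompact_range_of_periodic L.lattice _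
    hd.continuous fun z w hw ↦ by lift w to L.lattice using hw; exact Hext_periodic L y z w).isBounded x 0
  have h0 : Hext L y 0 = 0 := by simp [Hext]
  rw [h0] at this
  simp only [Hext, hx, hxy, or_self, if_false, Hdef] at this
  linear_combination this

/-- The differentiated identity. -/
lemma zeta_identity' (x y : ℂ) (hx : x ∉ L.lattice) (hy : y ∉ L.lattice)
    (hxy : x + y ∉ L.lattice) :
    2 * (zetaL L x + zetaL L y - zetaL L (x + y)) * (L.weierstrassP (x + y) - L.weierstrassP x)
      = deriv L.weierstrassP x + deriv L.weierstrassP (x + y) := by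
  have a1 := (zetaL_hasDerivAt L x hx)
  have a2 := ((zetaL_hasDerivAt L _ hxy).comp_add_const x y)
  have a3 := (wpL_hasDerivAt L x hx)
  have a4 := ((wpL_hasDerivAt L _ hxy).comp_add_const x y)
  have e1 := ((a1.add_const (zetaL L y)).sub a2).pow 2
  have e2 := (a3.add_const (L.weierstrassP y)).add a4
  have o1 := L.isClosed_lattice.isOpen_compl.mem_nhds hx
  have o2 : ∀ᶠ z in 𝓝 x, z + y ∈ (L.lattice : Set ℂ)ᶜ :=
    (continuousAt_id.add continuousAt_const).eventually
      (L.isClosed_lattice.isOpen_compl.mem_nhds hxy)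
  have e3 := e1.congr_of_eventuallyEq (f₁ := fun z => L.weierstrassP z + L.weierstrassP y
    + L.weierstrassP (z + y)) (by
      filter_upwards [o1, o2] with z h1 h2
      exact (zeta_identity L z y h1 hy h2).symm)
  have := e3.unique e2
  simp only [Pi.sub_apply] at this
  norm_num at this ⊢
  linear_combination this

end WeierstrassAux

section Bridge

open Topology

/-- The pair of periods of the lattice. -/
def perPair (ℓ δ : ℝ) (hℓ : 0 < ℓ) (hδ : 0 < δ) : PeriodPair where
  ω₁ := 2 * (ℓ : ℂ)
  ω₂ := 2 * ((δ : ℂ) * Complex.I)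
  indep := by
    rw [LinearIndependent.pair_iff]
    intro s t h
    have h1 := congrArg Complex.re h
    have h2 := congrArg Complex.im h
    simp at h1 h2
    exact ⟨h1.resolve_right hℓ.ne', h2.resolve_right hδ.ne'⟩

variable {ℓ δ : ℝ} (hℓ : 0 < ℓ) (hδ : 0 < δ)

lemma mem_perPair (z : ℂ) : z ∈ (perPair ℓ δ hℓ hδ).lattice ↔ z ∈ Lambda ℓ δ := by
  rw [PeriodPair.mem_lattice]
  simp only [Lambda, Set.mem_ofPred_eq, perPair]
  constructor
  · rintro ⟨m, n, h⟩
    exact ⟨m, n, by rw [← h]; ring⟩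
  · rintro ⟨m, n, h⟩
    exact ⟨m, n, by rw [h]; ring⟩

lemma tsum_bridge (g : ℂ → ℂ) :
    ∑' ω : latticePts ℓ δ, g ω
      = ∑' l : (perPair ℓ δ hℓ hδ).lattice, if l.1 = 0 then 0 else g l := by
  have h2 := tsum_subtype (((perPair ℓ δ hℓ hδ).lattice : Set ℂ)) (fun x => if x = 0 then 0 else g x)
  have h1 := tsum_subtype (latticePts ℓ δ) g
  rw [h1]
  refine Eq.trans ?_ h2.symm
  congr 1
  ext x
  have hm := mem_perPair hℓ hδ x
  by_cases hx : x = 0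
  · subst hx; simp [latticePts, Set.indicator]
  · have h3 : x ∈ latticePts ℓ δ ↔ x ∈ ((perPair ℓ δ hℓ hδ).lattice : Set ℂ) := by
      rw [SetLike.mem_coe, hm, latticePts]
      exact ⟨fun h => h.1, fun h => ⟨h, hx⟩⟩
    by_cases h4 : x ∈ latticePts ℓ δ
    · rw [Set.indicator_of_mem h4, Set.indicator_of_mem (h3.mp h4), if_neg hx]
    · rw [Set.indicator_of_notMem h4, Set.indicator_of_notMem (fun h => h4 (h3.mpr h))]

lemma wP_eq (z : ℂ) : wP ℓ δ z = (perPair ℓ δ hℓ hδ).weierstrassP z := by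
  rw [wpL_eq, wP, PeriodPair.weierstrassPExcept]
  rw [tsum_bridge hℓ hδ (fun ω => (1 / (z - ω) ^ 2 - 1 / ω ^ 2))]

lemma wZeta_eq (z : ℂ) : wZeta ℓ δ z = zetaL (perPair ℓ δ hℓ hδ) z := by
  rw [zetaL, wZeta, zetaEx]
  rw [tsum_bridge hℓ hδ (fun ω => (1 / (z - ω) + 1 / ω + z / ω ^ 2))]

end Bridge

section BridgeTwo

open Topology

variable {ℓ δ : ℝ}

lemma Lambda_neg (hℓ : 0 < ℓ) (hδ : 0 < δ) {z : ℂ} (hz : z ∉ Lambda ℓ δ) : -z ∉ Lambda ℓ δ := by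
  rw [← mem_perPair hℓ hδ] at hz ⊢
  rwa [neg_mem_iff]

lemma wp2_neg (hℓ : 0 < ℓ) (hδ : 0 < δ) (z : ℂ) : wp2 ℓ δ (-z) = wp2 ℓ δ z := by
  simp only [wp2, wP_eq hℓ hδ, PeriodPair.weierstrassP_neg]

lemma zeta2_neg (hℓ : 0 < ℓ) (hδ : 0 < δ) (z : ℂ) : zeta2 ℓ δ (-z) = -zeta2 ℓ δ z := by
  simp only [zeta2, wZeta_eq hℓ hδ, zetaL_neg]; ring

lemma f2_neg (hℓ : 0 < ℓ) (hδ : 0 < δ) (z : ℂ) : f2 ℓ δ (-z) = f2 ℓ δ z := by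
  simp only [f2, wp2_neg hℓ hδ, zeta2_neg hℓ hδ]; ring

lemma deriv_f2_neg (hℓ : 0 < ℓ) (hδ : 0 < δ) (z : ℂ) : deriv (f2 ℓ δ) (-z) = -deriv (f2 ℓ δ) z := by
  have h := deriv_comp_neg (f2 ℓ δ) z
  have e : (fun x => f2 ℓ δ (-x)) = f2 ℓ δ := funext (f2_neg hℓ hδ)
  rw [e] at h
  rw [h, neg_neg]

lemma zeta2_hasDerivAt (hℓ : 0 < ℓ) (hδ : 0 < δ) {z : ℂ} (hz : z ∉ Lambda ℓ δ) :
    HasDerivAt (zeta2 ℓ δ) (-wp2 ℓ δ z) z := by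
  rw [← mem_perPair hℓ hδ] at hz
  have e : wZeta ℓ δ = zetaL (perPair ℓ δ hℓ hδ) := funext (wZeta_eq hℓ hδ)
  unfold zeta2 wp2
  rw [e, wP_eq hℓ hδ]
  refine ((zetaL_hasDerivAt _ z hz).sub ((hasDerivAt_id z).const_mul _)).congr_deriv ?_
  ring

lemma wp2_hasDerivAt (hℓ : 0 < ℓ) (hδ : 0 < δ) {z : ℂ} (hz : z ∉ Lambda ℓ δ) :
    HasDerivAt (wp2 ℓ δ) (deriv (perPair ℓ δ hℓ hδ).weierstrassP z) z := by
  rw [← mem_perPair hℓ hδ] at hz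
  have e : wP ℓ δ = (perPair ℓ δ hℓ hδ).weierstrassP := funext (wP_eq hℓ hδ)
  unfold wp2
  rw [e]
  exact (wpL_hasDerivAt _ z hz).add_const _

lemma f2_hasDerivAt' (hℓ : 0 < ℓ) (hδ : 0 < δ) {z : ℂ} (hz : z ∉ Lambda ℓ δ) :
    HasDerivAt (f2 ℓ δ) (-2 * zeta2 ℓ δ z * wp2 ℓ δ z
      - deriv (perPair ℓ δ hℓ hδ).weierstrassP z) z := by
  refine (((zeta2_hasDerivAt hℓ hδ hz).pow 2).sub (wp2_hasDerivAt hℓ hδ hz)).congr_deriv ?_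
  norm_num

lemma f2_hasDerivAt (hℓ : 0 < ℓ) (hδ : 0 < δ) {z : ℂ} (hz : z ∉ Lambda ℓ δ) :
    HasDerivAt (f2 ℓ δ) (deriv (f2 ℓ δ) z) z :=
  (f2_hasDerivAt' hℓ hδ hz).differentiableAt.hasDerivAt

/-- Periodicity of `ζ₂` in the imaginary direction. -/
lemma zeta2_periodic (hℓ : 0 < ℓ) (hδ : 0 < δ) {z : ℂ} (hz : z ∉ Lambda ℓ δ) :
    zeta2 ℓ δ (z + 2 * ((δ : ℂ) * Complex.I)) = zeta2 ℓ δ z := by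
  set L := perPair ℓ δ hℓ hδ with hL
  obtain ⟨η, h⟩ := zetaL_quasi L ⟨L.ω₂, L.ω₂_mem_lattice⟩
  have hω : L.ω₂ = 2 * ((δ : ℂ) * Complex.I) := rfl
  simp only [hω] at h
  have hne : ((δ : ℂ) * Complex.I) ≠ 0 := by
    simp [hδ.ne']
  have hz' := hz
  rw [← mem_perPair hℓ hδ] at hz'
  have h1 := h z hz'
  have h2 := h (-((δ : ℂ) * Complex.I)) (by
    have := L.ω₂_div_two_notMem_lattice
    rw [hω, mul_div_cancel_left₀ _ (two_ne_zero)] at this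
    rwa [neg_mem_iff])
  rw [zetaL_neg, show -((δ : ℂ) * Complex.I) + 2 * ((δ : ℂ) * Complex.I)
    = (δ : ℂ) * Complex.I by ring] at h2
  simp only [zeta2, wZeta_eq hℓ hδ, ← hL]
  rw [h1]
  have h3 : zetaL L ((δ : ℂ) * Complex.I) / ((δ : ℂ) * Complex.I) * ((δ : ℂ) * Complex.I)
      = zetaL L ((δ : ℂ) * Complex.I) := div_mul_cancel₀ _ hne
  linear_combination -h2 - 2 * h3

/-- The auxiliary one-variable function in the three-body identity. -/
def hAux (ℓ δ : ℝ) (z : ℂ) : ℂ :=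
  wp2 ℓ δ z * zeta2 ℓ δ z ^ 2 + wp2 ℓ δ z ^ 2
    - 3 * (wZeta ℓ δ ((δ : ℂ) * Complex.I) / ((δ : ℂ) * Complex.I)) * wp2 ℓ δ z
    + zeta2 ℓ δ z * deriv (wp2 ℓ δ) z

lemma three_body (hℓ : 0 < ℓ) (hδ : 0 < δ) {u v : ℂ} (hu : u ∉ Lambda ℓ δ) (hv : v ∉ Lambda ℓ δ)
    (huv : v - u ∉ Lambda ℓ δ) :
    wp2 ℓ δ u * f2 ℓ δ v - wp2 ℓ δ v * f2 ℓ δ u - (wp2 ℓ δ u - wp2 ℓ δ v) * f2 ℓ δ (v - u)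
      - zeta2 ℓ δ u * deriv (f2 ℓ δ) v + zeta2 ℓ δ v * deriv (f2 ℓ δ) u
      = hAux ℓ δ v - hAux ℓ δ u := by
  rw [(f2_hasDerivAt' hℓ hδ hu).deriv, (f2_hasDerivAt' hℓ hδ hv).deriv]
  simp only [hAux]
  rw [(wp2_hasDerivAt hℓ hδ hu).deriv, (wp2_hasDerivAt hℓ hδ hv).deriv]
  rw [← mem_perPair hℓ hδ] at hu hv huv
  have i1 := zeta_identity _ (v - u) u huv hu (by simpa using hv)
  have i2 := zeta_identity' _ u (v - u) hu huv (by simpa using hv)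
  rw [sub_add_cancel] at i1
  rw [add_sub_cancel] at i2
  simp only [f2, zeta2, wp2]
  simp only [← wP_eq hℓ hδ, ← wZeta_eq hℓ hδ] at i1 i2 ⊢
  set L := perPair ℓ δ hℓ hδ
  set c := wZeta ℓ δ ((δ : ℂ) * Complex.I) / ((δ : ℂ) * Complex.I)
  generalize wZeta ℓ δ (v - u) = Zw at *
  generalize wZeta ℓ δ u = Zu at *
  generalize wZeta ℓ δ v = Zv at *
  generalize wP ℓ δ (v - u) = Pw at *
  generalize wP ℓ δ u = Pu at *
  generalize wP ℓ δ v = Pv at *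
  generalize deriv L.weierstrassP u = du at *
  generalize deriv L.weierstrassP v = dv at *
  linear_combination (-(Pu - Pv)) * i1 + ((Zv - c * v) - (Zu - c * u)) * i2

end BridgeTwo

section Algebra

lemma dot3_comm (u v : Fin 3 → ℂ) : dot3 u v = dot3 v u := by simp only [dot3]; ring
lemma dot3_add_left (u v w : Fin 3 → ℂ) : dot3 (u + v) w = dot3 u w + dot3 v w := by
  simp only [dot3, Pi.add_apply]; ring
lemma dot3_smul_left (c : ℂ) (u w : Fin 3 → ℂ) : dot3 (c • u) w = c * dot3 u w := by
  simp only [dot3, Pi.smul_apply, smul_eq_mul]; ring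
lemma dot3_neg_left (u w : Fin 3 → ℂ) : dot3 (-u) w = -dot3 u w := by
  simp only [dot3, Pi.neg_apply]; ring
lemma dot3_sum_left {ι : Type*} (s : Finset ι) (F : ι → Fin 3 → ℂ) (w : Fin 3 → ℂ) :
    dot3 (∑ k ∈ s, F k) w = ∑ k ∈ s, dot3 (F k) w := by
  simp only [dot3, Finset.sum_apply, Finset.sum_mul, Finset.sum_add_distrib]
lemma dot3_sum_right {ι : Type*} (s : Finset ι) (F : ι → Fin 3 → ℂ) (w : Fin 3 → ℂ) :
    dot3 w (∑ k ∈ s, F k) = ∑ k ∈ s, dot3 w (F k) := by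
  simp only [dot3, Finset.sum_apply, Finset.mul_sum, Finset.sum_add_distrib]
lemma cross3_sum_right {ι : Type*} (s : Finset ι) (F : ι → Fin 3 → ℂ) (w : Fin 3 → ℂ) :
    cross3 w (∑ k ∈ s, F k) = ∑ k ∈ s, cross3 w (F k) := by
  ext i
  fin_cases i <;>
    simp [cross3, Finset.sum_apply, Finset.mul_sum, Finset.sum_sub_distrib]
lemma cross3_smul_right (c : ℂ) (u w : Fin 3 → ℂ) : cross3 u (c • w) = c • cross3 u w := by
  ext i
  fin_cases i <;> simp [cross3] <;> ring
lemma cross3_sub_right (u v w : Fin 3 → ℂ) : cross3 u (v - w) = cross3 u v - cross3 u w := by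
  ext i
  fin_cases i <;> simp [cross3] <;> ring
lemma cross3_anticomm (u v : Fin 3 → ℂ) : cross3 u v = -cross3 v u := by
  ext i
  fin_cases i <;> simp [cross3] <;> ring
lemma dot3_sub_left (u v w : Fin 3 → ℂ) : dot3 (u - v) w = dot3 u w - dot3 v w := by
  simp only [dot3, Pi.sub_apply]; ring

/-- Triple product. -/
def trip (u v w : Fin 3 → ℂ) : ℂ := dot3 (cross3 u v) w

lemma trip_swap12 (u v w : Fin 3 → ℂ) : trip u v w = -trip v u w := by
  simp [trip, dot3, cross3]; ring
lemma trip_swap23 (u v w : Fin 3 → ℂ) : trip u v w = -trip u w v := by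
  simp [trip, dot3, cross3]; ring
lemma trip_self12 (u w : Fin 3 → ℂ) : trip u u w = 0 := by
  simp [trip, dot3, cross3]; ring
lemma trip_self23 (u w : Fin 3 → ℂ) : trip u w w = 0 := by
  simp [trip, dot3, cross3]; ring
lemma trip_self13 (u w : Fin 3 → ℂ) : trip u w u = 0 := by
  simp [trip, dot3, cross3]; ring

variable {ι : Type*} [Fintype ι]

/-- The three-body sum vanishes. -/
lemma three_sum_zero (S : ι → Fin 3 → ℂ) (r : ι → ℂ) (p z f g h : ι → ι → ℂ)
    (hp : ∀ j k, p j k = p k j)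
    (hG : ∀ j k l, j ≠ k → j ≠ l → k ≠ l → p j l * f j k - p j k * f j l
      - (p j l - p j k) * f l k - z j l * g j k + z j k * g j l = h j k - h j l)
    (hf : ∀ j k, f j k = f k j)
    (hS : ∑ j, S j = 0) :
    ∑ j, ∑ l, ∑ k, trip (S j) (S l) (S k) *
      ((r j + r l) * p j l * f j k - r j * z j l * g j k) = 0 := by
  set D : ι → ι → ι → ℂ := fun j l k => trip (S j) (S l) (S k) with hD
  have hsum3 : ∀ j l, ∑ k, D j l k = 0 := by
    intro j l
    simp only [hD, trip]
    rw [← dot3_sum_right, hS]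
    simp [dot3]
  have hsum2 : ∀ j k, ∑ l, D j l k = 0 := by
    intro j k
    simp only [hD, trip]
    rw [← dot3_sum_left, ← cross3_sum_right, hS]
    simp [dot3, cross3]
  have e1 : ∑ j, ∑ l, ∑ k, D j l k * (r l * p j l * f j k)
      = -∑ j, ∑ l, ∑ k, D j l k * (r j * p j l * f l k) := by
    rw [Finset.sum_comm, ← Finset.sum_neg_distrib]
    refine Finset.sum_congr rfl fun j _ => ?_
    rw [← Finset.sum_neg_distrib]
    refine Finset.sum_congr rfl fun l _ => ?_
    rw [← Finset.sum_neg_distrib]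
    refine Finset.sum_congr rfl fun k _ => ?_
    rw [show D l j k = -D j l k from trip_swap12 _ _ _, hp l j]
    ring
  set Q : ι → ι → ι → ℂ := fun j l k =>
    D j l k * (r j * (p j l * (f j k - f l k) - z j l * g j k)) with hQ
  have e2 : ∑ j, ∑ l, ∑ k, D j l k * ((r j + r l) * p j l * f j k - r j * z j l * g j k)
      = ∑ j, ∑ l, ∑ k, Q j l k := by
    have : ∑ j, ∑ l, ∑ k, Q j l k
      = ∑ j, ∑ l, ∑ k, (D j l k * ((r j + r l) * p j l * f j k - r j * z j l * g j k))
        - ∑ j, ∑ l, ∑ k, D j l k * (r l * p j l * f j k)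
        - ∑ j, ∑ l, ∑ k, D j l k * (r j * p j l * f l k) := by
      simp only [← Finset.sum_sub_distrib]
      refine Finset.sum_congr rfl fun j _ => Finset.sum_congr rfl fun l _ =>
        Finset.sum_congr rfl fun k _ => ?_
      simp only [hQ]
      ring
    rw [this, e1]
    ring
  rw [e2]
  refine Finset.sum_eq_zero fun j _ => ?_
  have e3 : ∑ l, ∑ k, Q j l k = ∑ l, ∑ k, Q j k l := Finset.sum_comm
  have e4 : ∑ l, ∑ k, Q j l k + ∑ l, ∑ k, Q j k l
      = ∑ l, ∑ k, D j l k * (r j * (h j k - h j l)) := by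
    simp only [← Finset.sum_add_distrib]
    refine Finset.sum_congr rfl fun l _ => Finset.sum_congr rfl fun k _ => ?_
    simp only [hQ]
    rw [show D j k l = -D j l k from trip_swap23 _ _ _]
    by_cases h1 : j = k
    · subst h1
      rw [show D j l j = 0 from trip_self13 _ _]; ring
    by_cases h2 : j = l
    · subst h2
      rw [show D j j k = 0 from trip_self12 _ _]; ring
    by_cases h3 : k = l
    · subst h3
      rw [show D j k k = 0 from trip_self23 _ _]; ring
    rw [← hG j k l h1 h2 h3, hf k l]
    ring
  have e5 : ∑ l, ∑ k, D j l k * (r j * (h j k - h j l)) = 0 := by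
    have a1 : ∑ l, ∑ k, D j l k * (r j * h j k) = 0 := by
      rw [Finset.sum_comm]
      refine Finset.sum_eq_zero fun k _ => ?_
      rw [← Finset.sum_mul, hsum2, zero_mul]
    have a2 : ∑ l, ∑ k, D j l k * (r j * h j l) = 0 := by
      refine Finset.sum_eq_zero fun k _ => ?_
      rw [← Finset.sum_mul, hsum3, zero_mul]
    simp only [mul_sub, Finset.sum_sub_distrib]
    rw [a1, a2, sub_zero]
  rw [← e3, e5] at e4
  linear_combination e4 / 2

/-- The time derivative of `R` vanishes algebraically. -/
lemma R_alg (S Sd : ι → Fin 3 → ℂ) (φ φd : Fin 3 → ℂ) (r xd : ι → ℂ) (p z f g h : ι → ι → ℂ)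
    (hp : ∀ j k, p j k = p k j) (hf : ∀ j k, f j k = f k j) (hg : ∀ j k, g j k = -g k j)
    (hG : ∀ j k l, j ≠ k → j ≠ l → k ≠ l → p j l * f j k - p j k * f j l
      - (p j l - p j k) * f l k - z j l * g j k + z j k * g j l = h j k - h j l)
    (hS : ∑ j, S j = 0)
    (hSd : ∀ j, Sd j = -∑ k, ((r j + r k) * p j k) • cross3 (S j) (S k))
    (hx : ∀ j, xd j • S j = -(r j • cross3 (S j) (Complex.I • φ - ∑ k, z j k • S k)))
    (hφ : φd = (Complex.I / 4) • ∑ j, ∑ k, ((r j + r k) * g j k) • cross3 (S j) (S k)) :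
    2 * dot3 φd φ - (1/2) * ∑ j, ∑ k, ((dot3 (Sd j) (S k) + dot3 (S j) (Sd k)) * f j k
      + dot3 (S j) (S k) * (g j k * (xd j - xd k))) = 0 := by
  have hT := three_sum_zero S r p z f g h hp hG hf hS
  set E : ι → ι → ℂ := fun j k => trip (S j) (S k) φ with hE
  have hEa : ∀ j k, E j k = -E k j := fun j k => trip_swap12 _ _ _
  have s1 : dot3 φd φ = (Complex.I / 2) * ∑ j, ∑ k, r j * g j k * E j k := by
    rw [hφ, dot3_smul_left, dot3_sum_left]
    simp only [dot3_sum_left, dot3_smul_left]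
    have : ∑ j, ∑ k, (r j + r k) * g j k * dot3 (cross3 (S j) (S k)) φ
        = ∑ j, ∑ k, r j * g j k * E j k + ∑ j, ∑ k, r k * g j k * E j k := by
      simp only [← Finset.sum_add_distrib]
      refine Finset.sum_congr rfl fun j _ => Finset.sum_congr rfl fun k _ => ?_
      simp only [hE, trip]; ring
    rw [this]
    have : ∑ j, ∑ k, r k * g j k * E j k = ∑ j, ∑ k, r j * g j k * E j k := by
      rw [Finset.sum_comm]
      refine Finset.sum_congr rfl fun j _ => Finset.sum_congr rfl fun k _ => ?_
      rw [hg k j, hEa k j]; ring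
    rw [this]; ring
  have s2 : ∑ j, ∑ k, ((dot3 (Sd j) (S k) + dot3 (S j) (Sd k)) * f j k
      + dot3 (S j) (S k) * (g j k * (xd j - xd k)))
      = 2 * ∑ j, ∑ k, (dot3 (Sd j) (S k) * f j k + dot3 (xd j • S j) (S k) * g j k) := by
    have a1 : ∑ j, ∑ k, (dot3 (Sd k) (S j) * f k j + dot3 (xd k • S k) (S j) * g k j)
      = ∑ j, ∑ k, (dot3 (Sd j) (S k) * f j k + dot3 (xd j • S j) (S k) * g j k) :=
      Finset.sum_comm
    rw [two_mul]
    nth_rewrite 1 [← a1]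
    simp only [← Finset.sum_add_distrib]
    refine Finset.sum_congr rfl fun j _ => Finset.sum_congr rfl fun k _ => ?_
    rw [dot3_smul_left, dot3_smul_left, hf k j, hg k j, dot3_comm (S k) (S j),
      dot3_comm (Sd k) (S j)]
    ring
  have s3 : ∀ j k, dot3 (Sd j) (S k) * f j k + dot3 (xd j • S j) (S k) * g j k
      = Complex.I * (r j * g j k * E j k) - ∑ l, trip (S j) (S l) (S k) *
      ((r j + r l) * p j l * f j k - r j * z j l * g j k) := by
    intro j k
    rw [hSd, hx, dot3_neg_left, dot3_neg_left, dot3_smul_left, dot3_sum_left, cross3_sub_right,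
      cross3_smul_right, cross3_sum_right, dot3_sub_left, dot3_smul_left, dot3_sum_left]
    simp only [cross3_smul_right, dot3_smul_left]
    have : dot3 (cross3 (S j) φ) (S k) = -E j k := trip_swap23 _ _ _
    rw [this]
    simp only [mul_sub, Finset.sum_sub_distrib, Finset.mul_sum, sub_mul, Finset.sum_mul, neg_mul,
      trip]
    have b1 : ∑ l, (r j + r l) * p j l * dot3 (cross3 (S j) (S l)) (S k) * f j k
      = ∑ l, dot3 (cross3 (S j) (S l)) (S k) * ((r j + r l) * p j l * f j k) :=
      Finset.sum_congr rfl fun l _ => by ring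
    have b2 : ∑ l, r j * (z j l * dot3 (cross3 (S j) (S l)) (S k)) * g j k
      = ∑ l, dot3 (cross3 (S j) (S l)) (S k) * (r j * z j l * g j k) :=
      Finset.sum_congr rfl fun l _ => by ring
    rw [b1, b2]
    ring
  rw [s1, s2]
  simp only [s3, Finset.sum_sub_distrib, ← Finset.mul_sum]
  have s4 : ∑ j, ∑ k, ∑ l, trip (S j) (S l) (S k) *
      ((r j + r l) * p j l * f j k - r j * z j l * g j k) = 0 := by
    rw [← hT]
    exact Finset.sum_congr rfl fun j _ => Finset.sum_comm
  rw [s4]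
  ring

/-- Conservation of the total spin, algebraic form. -/
lemma S_alg (S Sd : ι → Fin 3 → ℂ) (r : ι → ℂ) (p : ι → ι → ℂ)
    (hp : ∀ j k, p j k = p k j)
    (hSd : ∀ j, Sd j = -∑ k, ((r j + r k) * p j k) • cross3 (S j) (S k)) :
    ∑ j, Sd j = 0 := by
  have c : ∑ j, ∑ k, ((r j + r k) * p j k) • cross3 (S j) (S k)
      = -∑ j, ∑ k, ((r j + r k) * p j k) • cross3 (S j) (S k) := by
    conv_lhs => rw [Finset.sum_comm]
    rw [← Finset.sum_neg_distrib]
    refine Finset.sum_congr rfl fun j _ => ?_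
    rw [← Finset.sum_neg_distrib]
    refine Finset.sum_congr rfl fun k _ => ?_
    rw [hp k j, cross3_anticomm (S k) (S j), smul_neg, add_comm (r k)]
  rw [Finset.sum_congr rfl fun j _ => hSd j, Finset.sum_neg_distrib, self_eq_neg.mp c, neg_zero]

end Algebra

section Unified

variable {ι : Type*} [Fintype ι] [DecidableEq ι]

lemma const_of_zero {E : Type*} [NormedAddCommGroup E] [NormedSpace ℝ E] {T : ℝ} {F : ℝ → E}
    (h : ∀ τ ∈ Set.Ico (0:ℝ) T, HasDerivWithinAt F 0 (Set.Ico (0:ℝ) T) τ) :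
    ∀ τ₁ ∈ Set.Ico (0:ℝ) T, ∀ τ₂ ∈ Set.Ico (0:ℝ) T, F τ₁ = F τ₂ := by
  intro τ₁ h1 τ₂ h2
  have hT : (0:ℝ) < T := lt_of_le_of_lt h1.1 h1.2
  refine (convex_Ico (0:ℝ) T).is_const_of_fderivWithin_eq_zero (𝕜 := ℝ)
    (fun τ hτ => (h τ hτ).differentiableWithinAt) (fun τ hτ => ?_) h1 h2
  have := (h τ hτ).hasFDerivWithinAt.fderivWithin ((uniqueDiffOn_Ico 0 T) τ hτ)
  rw [this]; simp

lemma hasDerivWithinAt_dot3 {u v : ℝ → Fin 3 → ℂ} {u' v' : Fin 3 → ℂ} {s : Set ℝ} {τ : ℝ}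
    (hu : HasDerivWithinAt u u' s τ) (hv : HasDerivWithinAt v v' s τ) :
    HasDerivWithinAt (fun τ => dot3 (u τ) (v τ)) (dot3 u' (v τ) + dot3 (u τ) v') s τ := by
  rw [hasDerivWithinAt_pi] at hu hv
  unfold dot3
  refine ((((hu 0).mul (hv 0)).add ((hu 1).mul (hv 1))).add ((hu 2).mul (hv 2))).congr_deriv ?_
  ring

/-- Conservation for the unified system. -/
theorem unified (ℓ δ : ℝ) (hℓ : 0 < ℓ) (hδ : 0 < δ) (T : ℝ) (φ φd : ℝ → Fin 3 → ℂ)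
    (x xd : ι → ℝ → ℂ) (S Sd : ι → ℝ → Fin 3 → ℂ) (r : ι → ℂ)
    (hx : ∀ j, ∀ τ ∈ Set.Ico (0:ℝ) T, HasDerivWithinAt (x j) (xd j τ) (Set.Ico (0:ℝ) T) τ)
    (hS : ∀ j, ∀ τ ∈ Set.Ico (0:ℝ) T, HasDerivWithinAt (S j) (Sd j τ) (Set.Ico (0:ℝ) T) τ)
    (hφ : ∀ τ ∈ Set.Ico (0:ℝ) T, HasDerivWithinAt φ (φd τ) (Set.Ico (0:ℝ) T) τ)
    (hne : ∀ τ ∈ Set.Ico (0:ℝ) T, ∀ j k, j ≠ k → x j τ - x k τ ∉ Lambda ℓ δ)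
    (hSd : ∀ τ ∈ Set.Ico (0:ℝ) T, ∀ j, Sd j τ = -∑ k, ((r j + r k) *
      (if j = k then 0 else wp2 ℓ δ (x j τ - x k τ))) • cross3 (S j τ) (S k τ))
    (hxd : ∀ τ ∈ Set.Ico (0:ℝ) T, ∀ j, xd j τ • S j τ = -(r j • cross3 (S j τ)
      (Complex.I • φ τ - ∑ k, (if j = k then 0 else zeta2 ℓ δ (x j τ - x k τ)) • S k τ)))
    (hφd : ∀ τ ∈ Set.Ico (0:ℝ) T, φd τ = (Complex.I / 4) • ∑ j, ∑ k, ((r j + r k) *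
      (if j = k then 0 else deriv (f2 ℓ δ) (x j τ - x k τ))) • cross3 (S j τ) (S k τ))
    (h0 : ∑ j, S j 0 = 0) :
    ∀ τ₁ ∈ Set.Ico (0:ℝ) T, ∀ τ₂ ∈ Set.Ico (0:ℝ) T,
      dot3 (φ τ₁) (φ τ₁) - (1/2 : ℂ) * ∑ j, ∑ k, dot3 (S j τ₁) (S k τ₁) *
          (if j = k then 0 else f2 ℓ δ (x j τ₁ - x k τ₁))
      = dot3 (φ τ₂) (φ τ₂) - (1/2 : ℂ) * ∑ j, ∑ k, dot3 (S j τ₂) (S k τ₂) *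
          (if j = k then 0 else f2 ℓ δ (x j τ₂ - x k τ₂)) := by
  have hpsym : ∀ τ, ∀ j k, (if j = k then 0 else wp2 ℓ δ (x j τ - x k τ))
      = (if k = j then 0 else wp2 ℓ δ (x k τ - x j τ)) := by
    intro τ j k
    by_cases h : j = k
    · simp [h]
    · rw [if_neg h, if_neg (Ne.symm h), ← wp2_neg hℓ hδ, neg_sub]
  have hfsym : ∀ τ, ∀ j k, (if j = k then 0 else f2 ℓ δ (x j τ - x k τ))
      = (if k = j then 0 else f2 ℓ δ (x k τ - x j τ)) := by
    intro τ j k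
    by_cases h : j = k
    · simp [h]
    · rw [if_neg h, if_neg (Ne.symm h), ← f2_neg hℓ hδ, neg_sub]
  have hgsym : ∀ τ, ∀ j k, (if j = k then 0 else deriv (f2 ℓ δ) (x j τ - x k τ))
      = -(if k = j then 0 else deriv (f2 ℓ δ) (x k τ - x j τ)) := by
    intro τ j k
    by_cases h : j = k
    · simp [h]
    · rw [if_neg h, if_neg (Ne.symm h), ← deriv_f2_neg hℓ hδ, neg_sub]
  have hSum : ∀ τ ∈ Set.Ico (0:ℝ) T, ∑ j, S j τ = 0 := by
    intro τ hτ
    rw [← h0]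
    refine const_of_zero (T := T) (F := fun τ => ∑ j, S j τ) (fun τ hτ => ?_) τ hτ 0
      ⟨le_refl _, lt_of_le_of_lt hτ.1 hτ.2⟩
    have := HasDerivWithinAt.fun_sum (u := Finset.univ) (fun j _ => hS j τ hτ)
    rwa [S_alg (fun j => S j τ) (fun j => Sd j τ) r _ (hpsym τ) (hSd τ hτ)] at this
  refine const_of_zero (fun τ hτ => ?_)
  have hF : ∀ j k, HasDerivWithinAt (fun τ => if j = k then 0 else f2 ℓ δ (x j τ - x k τ))
      ((if j = k then 0 else deriv (f2 ℓ δ) (x j τ - x k τ)) * (xd j τ - xd k τ))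
      (Set.Ico (0:ℝ) T) τ := by
    intro j k
    by_cases h : j = k
    · simp only [h, if_true, zero_mul]
      exact hasDerivWithinAt_const _ _ _
    · simp only [h, if_false]
      exact (f2_hasDerivAt hℓ hδ (hne τ hτ j k h)).comp_hasDerivWithinAt τ
        ((hx j τ hτ).sub (hx k τ hτ))
  have hd := (hasDerivWithinAt_dot3 (hφ τ hτ) (hφ τ hτ)).sub
    ((HasDerivWithinAt.fun_sum (u := Finset.univ) (fun j _ =>
      HasDerivWithinAt.fun_sum (u := Finset.univ) (fun k _ =>
        (hasDerivWithinAt_dot3 (hS j τ hτ) (hS k τ hτ)).mul (hF j k)))).const_mul (1/2 : ℂ))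
  refine hd.congr_deriv ?_
  have key := R_alg (fun j => S j τ) (fun j => Sd j τ) (φ τ) (φd τ) r (fun j => xd j τ)
    _ _ _ _ (fun j k => hAux ℓ δ (x j τ - x k τ)) (hpsym τ) (hfsym τ) (hgsym τ)
    (by
      intro j k l hjk hjl hkl
      simp only [if_neg hjk, if_neg hjl, if_neg hkl.symm]
      have := three_body hℓ hδ (hne τ hτ j l hjl) (hne τ hτ j k hjk)
        (by rw [sub_sub_sub_cancel_left]; exact hne τ hτ l k hkl.symm)
      rw [sub_sub_sub_cancel_left] at this
      exact this)
    (hSum τ hτ) (hSd τ hτ) (hxd τ hτ) (hφd τ hτ)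
  rw [dot3_comm (φ τ) (φd τ)]
  linear_combination key

end Unified

section Final

lemma sum_erase_ite {E : Type*} [AddCommMonoid E] {n : ℕ} (j : Fin n) (g : Fin n → E) :
    ∑ k ∈ Finset.univ.erase j, g k = ∑ k, if j = k then 0 else g k := by
  rw [← Finset.sum_subset (Finset.erase_subset j Finset.univ)]
  · refine Finset.sum_congr rfl fun k hk => ?_
    rw [if_neg (Finset.ne_of_mem_erase hk).symm]
  · intro k _ hk
    have : k = j := by simpa using hk
    simp [this]

lemma cross3_neg_neg (u v : Fin 3 → ℂ) : cross3 (-u) (-v) = cross3 u v := by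
  ext i
  fin_cases i <;> simp [cross3]

lemma cross3_neg_left (u v : Fin 3 → ℂ) : cross3 (-u) v = -cross3 u v := by
  ext i
  fin_cases i <;> simp [cross3] <;> ring

lemma dot3_neg_right (u v : Fin 3 → ℂ) : dot3 u (-v) = -dot3 u v := by
  simp only [dot3, Pi.neg_apply]; ring

end Final

/-- Conservation of the quantity `R` under the first-order system. -/
theorem R_conserved
    (ℓ δ : ℝ) (hℓ : 0 < ℓ) (hδ : 0 < δ)
    (N M : ℕ) (hN : 1 ≤ N) (hM : 1 ≤ M)
    (T : ℝ) (hT : 0 < T)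
    (φ : ℝ → Fin 3 → ℂ)
    (a : Fin N → ℝ → ℂ) (s : Fin N → ℝ → Fin 3 → ℂ)
    (b : Fin M → ℝ → ℂ) (t : Fin M → ℝ → Fin 3 → ℂ)
    (adot : Fin N → ℝ → ℂ) (bdot : Fin M → ℝ → ℂ)
    -- differentiability of the positions, with derivatives `adot`, `bdot`
    (ha : ∀ j, ∀ τ ∈ Set.Ico (0:ℝ) T, HasDerivWithinAt (a j) (adot j τ) (Set.Ico (0:ℝ) T) τ)
    (hb : ∀ j, ∀ τ ∈ Set.Ico (0:ℝ) T, HasDerivWithinAt (b j) (bdot j τ) (Set.Ico (0:ℝ) T) τ)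
    -- nondegeneracy: differences of poles avoid the lattice
    (haa : ∀ τ ∈ Set.Ico (0:ℝ) T, ∀ j k : Fin N, j ≠ k → a j τ - a k τ ∉ Lambda ℓ δ)
    (hbb : ∀ τ ∈ Set.Ico (0:ℝ) T, ∀ j k : Fin M, j ≠ k → b j τ - b k τ ∉ Lambda ℓ δ)
    (hab : ∀ τ ∈ Set.Ico (0:ℝ) T, ∀ (j : Fin N) (k : Fin M),
      a j τ - b k τ + (δ : ℂ) * Complex.I ∉ Lambda ℓ δ)
    -- the first-order system: spin equations
    (hsdot : ∀ j, ∀ τ ∈ Set.Ico (0:ℝ) T, HasDerivWithinAt (s j)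
      ((-2 : ℂ) • ∑ k ∈ Finset.univ.erase j, wp2 ℓ δ (a j τ - a k τ) • cross3 (s j τ) (s k τ))
      (Set.Ico (0:ℝ) T) τ)
    (htdot : ∀ j, ∀ τ ∈ Set.Ico (0:ℝ) T, HasDerivWithinAt (t j)
      ((-2 : ℂ) • ∑ k ∈ Finset.univ.erase j, wp2 ℓ δ (b j τ - b k τ) • cross3 (t j τ) (t k τ))
      (Set.Ico (0:ℝ) T) τ)
    -- the first-order system: pole equations
    (hadot : ∀ j, ∀ τ ∈ Set.Ico (0:ℝ) T,
      adot j τ • s j τ = -cross3 (s j τ)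
        (Complex.I • φ τ - ∑ k ∈ Finset.univ.erase j, zeta2 ℓ δ (a j τ - a k τ) • s k τ
          + ∑ k : Fin M, zeta2 ℓ δ (a j τ - b k τ + (δ : ℂ) * Complex.I) • t k τ))
    (hbdot : ∀ j, ∀ τ ∈ Set.Ico (0:ℝ) T,
      bdot j τ • t j τ = cross3 (t j τ)
        (Complex.I • φ τ + ∑ k ∈ Finset.univ.erase j, zeta2 ℓ δ (b j τ - b k τ) • t k τ
          - ∑ k : Fin N, zeta2 ℓ δ (b j τ - a k τ + (δ : ℂ) * Complex.I) • s k τ))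
    -- the first-order system: background equation
    (hφdot : ∀ τ ∈ Set.Ico (0:ℝ) T, HasDerivWithinAt φ
      ((Complex.I / 2) • ∑ j : Fin N, ∑ k ∈ Finset.univ.erase j,
          deriv (f2 ℓ δ) (a j τ - a k τ) • cross3 (s j τ) (s k τ)
        - (Complex.I / 2) • ∑ j : Fin M, ∑ k ∈ Finset.univ.erase j,
          deriv (f2 ℓ δ) (b j τ - b k τ) • cross3 (t j τ) (t k τ))
      (Set.Ico (0:ℝ) T) τ)
    (hC3 : (∑ j : Fin N, s j 0) - ∑ j : Fin M, t j 0 = 0)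
    (hC1s : ∀ j, dot3 (s j 0) (s j 0) = 0)
    (hC1t : ∀ j, dot3 (t j 0) (t j 0) = 0) :
    ∀ τ₁ ∈ Set.Ico (0:ℝ) T, ∀ τ₂ ∈ Set.Ico (0:ℝ) T,
      (dot3 (φ τ₁) (φ τ₁)
        - (1/2 : ℂ) * ∑ j : Fin N, ∑ k ∈ Finset.univ.erase j,
            dot3 (s j τ₁) (s k τ₁) * f2 ℓ δ (a j τ₁ - a k τ₁)
        - (1/2 : ℂ) * ∑ j : Fin M, ∑ k ∈ Finset.univ.erase j,
            dot3 (t j τ₁) (t k τ₁) * f2 ℓ δ (b j τ₁ - b k τ₁)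
        + ∑ j : Fin N, ∑ k : Fin M,
            dot3 (s j τ₁) (t k τ₁) * f2 ℓ δ (a j τ₁ - b k τ₁ + (δ : ℂ) * Complex.I))
      = (dot3 (φ τ₂) (φ τ₂)
        - (1/2 : ℂ) * ∑ j : Fin N, ∑ k ∈ Finset.univ.erase j,
            dot3 (s j τ₂) (s k τ₂) * f2 ℓ δ (a j τ₂ - a k τ₂)
        - (1/2 : ℂ) * ∑ j : Fin M, ∑ k ∈ Finset.univ.erase j,
            dot3 (t j τ₂) (t k τ₂) * f2 ℓ δ (b j τ₂ - b k τ₂)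
        + ∑ j : Fin N, ∑ k : Fin M,
            dot3 (s j τ₂) (t k τ₂) * f2 ℓ δ (a j τ₂ - b k τ₂ + (δ : ℂ) * Complex.I)) := by
  have hsub : ∀ τ (j k : Fin M), (b j τ - (δ : ℂ) * Complex.I) - (b k τ - (δ : ℂ) * Complex.I)
      = b j τ - b k τ := fun τ j k => by ring
  have hsub1 : ∀ τ (j : Fin N) (k : Fin M), a j τ - (b k τ - (δ : ℂ) * Complex.I)
      = a j τ - b k τ + (δ : ℂ) * Complex.I := fun τ j k => by ring
  have hsub2 : ∀ τ (j : Fin N) (k : Fin M), (b k τ - (δ : ℂ) * Complex.I) - a j τ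
      = -(a j τ - b k τ + (δ : ℂ) * Complex.I) := fun τ j k => by ring
  have U := unified (ι := Fin N ⊕ Fin M) ℓ δ hℓ hδ T φ
    (fun τ => (Complex.I / 2) • ∑ j : Fin N, ∑ k ∈ Finset.univ.erase j,
          deriv (f2 ℓ δ) (a j τ - a k τ) • cross3 (s j τ) (s k τ)
        - (Complex.I / 2) • ∑ j : Fin M, ∑ k ∈ Finset.univ.erase j,
          deriv (f2 ℓ δ) (b j τ - b k τ) • cross3 (t j τ) (t k τ))
    (Sum.elim a (fun j τ => b j τ - (δ : ℂ) * Complex.I)) (Sum.elim adot bdot)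
    (Sum.elim s (fun j τ => -t j τ))
    (Sum.elim (fun j τ => (-2 : ℂ) • ∑ k ∈ Finset.univ.erase j,
        wp2 ℓ δ (a j τ - a k τ) • cross3 (s j τ) (s k τ))
      (fun j τ => -((-2 : ℂ) • ∑ k ∈ Finset.univ.erase j,
        wp2 ℓ δ (b j τ - b k τ) • cross3 (t j τ) (t k τ))))
    (Sum.elim (fun _ => 1) (fun _ => -1))
    (by
      rintro (j | j) τ hτ
      · exact ha j τ hτ
      · exact (hb j τ hτ).sub_const _)
    (by
      rintro (j | j) τ hτ
      · exact hsdot j τ hτ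
      · exact (htdot j τ hτ).neg)
    hφdot
    (by
      rintro τ hτ (j | j) (k | k) hjk
      · exact haa τ hτ j k (fun h => hjk (by rw [h]))
      · simp only [Sum.elim_inl, Sum.elim_inr, hsub1]
        exact hab τ hτ j k
      · simp only [Sum.elim_inl, Sum.elim_inr, hsub2]
        exact Lambda_neg hℓ hδ (hab τ hτ k j)
      · simp only [Sum.elim_inr, hsub]
        exact hbb τ hτ j k (fun h => hjk (by rw [h])))
    (by
      rintro τ hτ (j | j)
      · simp only [Sum.elim_inl, Sum.elim_inr, Fintype.sum_sum_type, sum_erase_ite,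
          Sum.inl.injEq, reduceCtorEq, if_false]
        simp only [add_neg_cancel, zero_mul, zero_smul, Finset.sum_const_zero, add_zero,
          Finset.smul_sum, ← Finset.sum_neg_distrib]
        refine Finset.sum_congr rfl fun k _ => ?_
        by_cases h : j = k
        · simp [h]
        · simp only [if_neg h, smul_smul, ← neg_smul]
          congr 1
          ring
      · simp only [Sum.elim_inl, Sum.elim_inr, Fintype.sum_sum_type, sum_erase_ite,
          Sum.inr.injEq, reduceCtorEq, if_false, hsub, cross3_neg_neg]
        simp only [neg_add_cancel, zero_mul, zero_smul, Finset.sum_const_zero, zero_add,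
          Finset.smul_sum, ← Finset.sum_neg_distrib]
        refine Finset.sum_congr rfl fun k _ => ?_
        by_cases h : j = k
        · simp [h]
        · simp only [if_neg h, smul_smul, ← neg_smul]
          congr 1
          ring)
    (by
      rintro τ hτ (j | j)
      · simp only [Sum.elim_inl, Sum.elim_inr, Fintype.sum_sum_type,
          Sum.inl.injEq, reduceCtorEq, if_false, hsub1, one_smul, smul_neg,
          Finset.sum_neg_distrib, ite_smul, zero_smul]
        rw [hadot j τ hτ, sum_erase_ite]
        congr 2
        abel
      · simp only [Sum.elim_inl, Sum.elim_inr, Fintype.sum_sum_type,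
          Sum.inr.injEq, reduceCtorEq, if_false, hsub, neg_smul, one_smul, smul_neg, neg_neg,
          ite_smul, zero_smul]
        rw [hbdot j τ hτ, sum_erase_ite, cross3_neg_left]
        congr 2
        have e1 : ∀ k, zeta2 ℓ δ (b j τ - a k τ + (δ : ℂ) * Complex.I)
            = zeta2 ℓ δ (b j τ - (δ : ℂ) * Complex.I - a k τ) := by
          intro k
          rw [← zeta2_periodic hℓ hδ (z := b j τ - (δ : ℂ) * Complex.I - a k τ)
            (by rw [hsub2]; exact Lambda_neg hℓ hδ (hab τ hτ k j))]
          congr 1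
          ring
        have e2 : ∑ k, (if j = k then 0 else -(zeta2 ℓ δ (b j τ - b k τ) • t k τ))
            = -∑ k, (if j = k then 0 else (zeta2 ℓ δ (b j τ - b k τ) • t k τ)) := by
          rw [← Finset.sum_neg_distrib]
          refine Finset.sum_congr rfl fun k _ => ?_
          split_ifs <;> simp
        simp only [e1, e2]
        abel)
    (by
      intro τ hτ
      simp only [Sum.elim_inl, Sum.elim_inr, Fintype.sum_sum_type, sum_erase_ite,
          Sum.inl.injEq, Sum.inr.injEq, reduceCtorEq, if_false, hsub, cross3_neg_neg]
      simp only [add_neg_cancel, neg_add_cancel, zero_mul, zero_smul, Finset.sum_const_zero,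
        add_zero, zero_add, smul_add, sub_eq_add_neg]
      simp only [Finset.smul_sum, ← Finset.sum_neg_distrib]
      congr 1 <;>
      · refine Finset.sum_congr rfl fun j _ => Finset.sum_congr rfl fun k _ => ?_
        by_cases h : j = k
        · simp [h]
        · simp only [if_neg h, smul_smul, ← neg_smul]
          congr 1
          ring)
    (by
      simp only [Sum.elim_inl, Sum.elim_inr, Fintype.sum_sum_type, Finset.sum_neg_distrib]
      rw [← hC3]; abel)
  have hR : ∀ τ, (dot3 (φ τ) (φ τ)
        - (1/2 : ℂ) * ∑ j : Fin N, ∑ k ∈ Finset.univ.erase j,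
            dot3 (s j τ) (s k τ) * f2 ℓ δ (a j τ - a k τ)
        - (1/2 : ℂ) * ∑ j : Fin M, ∑ k ∈ Finset.univ.erase j,
            dot3 (t j τ) (t k τ) * f2 ℓ δ (b j τ - b k τ)
        + ∑ j : Fin N, ∑ k : Fin M,
            dot3 (s j τ) (t k τ) * f2 ℓ δ (a j τ - b k τ + (δ : ℂ) * Complex.I))
      = dot3 (φ τ) (φ τ) - (1/2 : ℂ) * ∑ j : Fin N ⊕ Fin M, ∑ k : Fin N ⊕ Fin M,
          dot3 (Sum.elim s (fun j τ => -t j τ) j τ) (Sum.elim s (fun j τ => -t j τ) k τ) *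
          (if j = k then 0 else f2 ℓ δ (Sum.elim a (fun j τ => b j τ - (δ : ℂ) * Complex.I) j τ
            - Sum.elim a (fun j τ => b j τ - (δ : ℂ) * Complex.I) k τ)) := by
    intro τ
    simp only [Sum.elim_inl, Sum.elim_inr, Fintype.sum_sum_type, sum_erase_ite,
      Sum.inl.injEq, Sum.inr.injEq, reduceCtorEq, if_false, hsub, hsub1, hsub2, f2_neg hℓ hδ,
      dot3_neg_left, dot3_neg_right, neg_neg, neg_mul, Finset.sum_neg_distrib,
      Finset.sum_add_distrib, mul_ite, mul_zero]
    have e : ∑ j : Fin M, ∑ k : Fin N,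
          dot3 (t j τ) (s k τ) * f2 ℓ δ (a k τ - b j τ + (δ : ℂ) * Complex.I)
        = ∑ j : Fin N, ∑ k : Fin M,
            dot3 (s j τ) (t k τ) * f2 ℓ δ (a j τ - b k τ + (δ : ℂ) * Complex.I) := by
      rw [Finset.sum_comm]
      simp only [dot3_comm]
    rw [e]
    ring
  intro τ₁ h₁ τ₂ h₂
  rw [hR τ₁, hR τ₂]
  exact U τ₁ h₁ τ₂ h₂

end
end

section
/- Let u, v, w ∈ ℂ be such that u − v ∉ Λ, u − w ∉ Λ, and v − w ∉ Λ. Then (ζ₂(u−w) − ζ₂(v−w))·℘₂(u−v) = −(ζ₂(u−v) − ζ₂(u−w))·℘₂(v−w) − (1/2)(f₂′(u−v) − f₂′(v−w)). -/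
open Complex Filter MeasureTheory Finset

noncomputable section

namespace ThreePt
open Topology PeriodPair Filter Complex Finset

variable (L : PeriodPair)

/-- The zeta function without its principal part at the origin. -/
noncomputable def zetaE (z : ℂ) : ℂ :=
  ∑' l : L.lattice, if l.1 = 0 then 0 else (1 / (z - l) + 1 / l.1 + z / l.1 ^ 2)

lemma zeta_bound (r : ℝ) (hr : 0 < r) (s : ℂ) (hs : ‖s‖ < r) (l : ℂ) (h : 2 * r ≤ ‖l‖) :
    ‖1 / (s - l) + 1 / l + s / l ^ 2‖ ≤ 2 * r ^ 2 * ‖l‖ ^ (-3 : ℝ) := by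
  have hl : 0 < ‖l‖ := by linarith
  have hl0 : l ≠ 0 := norm_pos_iff.mp hl
  have hsl : ‖l‖ / 2 ≤ ‖s - l‖ := by
    have := norm_sub_norm_le l s
    rw [norm_sub_rev] at this
    linarith
  have hsl0 : s - l ≠ 0 := norm_pos_iff.mp (by linarith)
  have e : 1 / (s - l) + 1 / l + s / l ^ 2 = s ^ 2 / (l ^ 2 * (s - l)) := by
    field_simp
    ring
  rw [e, norm_div, norm_mul, norm_pow, norm_pow, Real.rpow_neg hl.le]
  have h3 : ‖l‖ ^ (3 : ℝ) = ‖l‖ ^ 3 := by exact_mod_cast Real.rpow_natCast ‖l‖ 3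
  rw [h3, ← div_eq_mul_inv]
  calc ‖s‖ ^ 2 / (‖l‖ ^ 2 * ‖s - l‖) ≤ r ^ 2 / (‖l‖ ^ 2 * (‖l‖ / 2)) := by gcongr
    _ = 2 * r ^ 2 / ‖l‖ ^ 3 := by field_simp

lemma hasSumLocallyUniformly_zetaE :
    HasSumLocallyUniformly (fun (l : L.lattice) (z : ℂ) ↦
      if l.1 = 0 then 0 else (1 / (z - l) + 1 / l.1 + z / l.1 ^ 2)) (zetaE L) := by
  refine L.hasSumLocallyUniformly_aux (u := fun r l ↦ 2 * r ^ 2 * ‖l.1‖ ^ (-3 : ℝ)) _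
    (fun r hr ↦ ?_) fun r hr ↦ ?_
  · exact (ZLattice.summable_norm_rpow _ _ (by simp; norm_num)).mul_left _
  · filter_upwards [eventually_ge_atTop (2 * r)] with R hR s hs l hl
    split_ifs
    · simp only [norm_zero]; positivity
    · exact zeta_bound r hr s hs l.1 (hl ▸ hR)

lemma differentiableOn_zetaE : DifferentiableOn ℂ (zetaE L) (L.lattice \ {0})ᶜ := by
  refine (hasSumLocallyUniformly_zetaE L).hasSumLocallyUniformlyOn.differentiableOn
    (.of_forall fun s ↦ .fun_sum fun i hi ↦ ?_) L.isOpen_compl_lattice_sdiff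
  split_ifs
  · simp
  refine .add (.add (.div (by fun_prop) (by fun_prop) fun x hx ↦ ?_) (by fun_prop)) (by fun_prop)
  have : x ≠ i := by rintro rfl; simp_all
  simpa [sub_eq_zero]

lemma deriv_zetaE : Set.EqOn (deriv (zetaE L)) (fun z ↦ - weierstrassPExcept L 0 z)
    (L.lattice \ {0})ᶜ := by
  have key : ∀ (z : ℂ), z ∈ (L.lattice \ {0} : Set ℂ)ᶜ → ∀ l : L.lattice,
      HasDerivAt (fun z : ℂ ↦ if l.1 = 0 then 0 else (1 / (z - l) + 1 / l.1 + z / l.1 ^ 2))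
        (- (if l.1 = 0 then 0 else (1 / (z - l) ^ 2 - 1 / l.1 ^ 2))) z := by
    intro z hz l
    split_ifs with h
    · simpa using hasDerivAt_const z (0 : ℂ)
    have hl₁ : z - l ≠ 0 := fun e ↦ h (by
        obtain rfl := sub_eq_zero.mp e
        simpa using hz)
    have h1 := ((hasDerivAt_id z).sub_const l.1).inv hl₁
    have h2 := (h1.add_const (1 / l.1)).add ((hasDerivAt_id z).div_const (l.1 ^ 2))
    refine (h2.congr_deriv ?_).congr_of_eventuallyEq (.of_forall fun w ↦ ?_)
    · simp; ring
    · simp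
  refine ((hasSumLocallyUniformly_zetaE L).tendstoLocallyUniformlyOn.deriv
    (.of_forall fun s ↦ ?_) L.isOpen_compl_lattice_sdiff).unique ?_
  · exact .fun_sum fun i hi z hz ↦ (key z hz i).differentiableAt.differentiableWithinAt
  · refine ((L.hasSumLocallyUniformly_weierstrassPExcept 0).tendstoLocallyUniformlyOn.neg).congr ?_
    intro s z hz
    simp only [Function.comp_apply, Pi.neg_apply]
    rw [deriv_fun_sum fun i _ ↦ (key z hz i).differentiableAt, ← Finset.sum_neg_distrib]
    exact Finset.sum_congr rfl fun i _ ↦ (key z hz i).deriv.symm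

/-- The zeta function of a period pair. -/
noncomputable def zeta (z : ℂ) : ℂ := 1 / z + zetaE L z

lemma weierstrassP_eq (z : ℂ) : weierstrassP L z = weierstrassPExcept L 0 z + 1 / z ^ 2 := by
  have := L.weierstrassPExcept_add 0 z
  simpa using this.symm

lemma derivWeierstrassP_eq (z : ℂ) :
    derivWeierstrassP L z = derivWeierstrassPExcept L 0 z - 2 / z ^ 3 := by
  have := L.derivWeierstrassPExcept_sub 0 z
  simpa using this.symm

lemma hasDerivAt_zeta {z : ℂ} (hz : z ∉ L.lattice) :
    HasDerivAt (zeta L) (- weierstrassP L z) z := by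
  have hz' : z ∈ (L.lattice \ {0} : Set ℂ)ᶜ := fun h ↦ hz h.1
  have hz0 : z ≠ 0 := by rintro rfl; simp at hz
  have h1 := ((differentiableOn_zetaE L).differentiableAt
    (L.isOpen_compl_lattice_sdiff.mem_nhds hz')).hasDerivAt
  rw [deriv_zetaE L hz'] at h1
  refine (((hasDerivAt_inv hz0).add h1).congr_deriv ?_).congr_of_eventuallyEq
    (.of_forall fun w ↦ ?_)
  · rw [weierstrassP_eq]; field_simp; ring
  · simp [zeta]

lemma hasDerivAt_P {z : ℂ} (hz : z ∉ L.lattice) :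
    HasDerivAt (weierstrassP L) (derivWeierstrassP L z) z := by
  rw [← deriv_weierstrassP]
  exact (L.analyticOnNhd_weierstrassP z hz).differentiableAt.hasDerivAt

lemma differentiableAt_P' {z : ℂ} (hz : z ∉ L.lattice) :
    DifferentiableAt ℂ (derivWeierstrassP L) z :=
  (L.analyticOnNhd_derivWeierstrassP z hz).differentiableAt

lemma countable_lattice : (L.lattice : Set ℂ).Countable := by
  have : Countable L.lattice := L.latticeEquivProd.toEquiv.countable_iff.mpr inferInstance
  exact this

lemma add_notMem {z l : ℂ} (hz : z ∉ L.lattice) (hl : l ∈ L.lattice) : z + l ∉ L.lattice :=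
  fun h ↦ hz (by simpa using sub_mem h hl)

lemma zeta_quasi (l : ℂ) (hl : l ∈ L.lattice) :
    ∃ c, ∀ z ∉ L.lattice, zeta L (z + l) = zeta L z + c := by
  have hd : ∀ z ∈ (L.lattice : Set ℂ)ᶜ, HasDerivAt (fun z ↦ zeta L (z + l) - zeta L z) 0 z := by
    intro z hz
    have h1 := (hasDerivAt_zeta L (add_notMem L hz hl)).comp_add_const z l
    refine (h1.sub (hasDerivAt_zeta L hz)).congr_deriv ?_
    have := L.weierstrassP_add_coe z ⟨l, hl⟩
    simp only at this
    rw [this]; simp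
  obtain ⟨c, hc⟩ := L.isClosed_lattice.isOpen_compl.exists_is_const_of_deriv_eq_zero
    ((countable_lattice L).isPathConnected_compl_of_one_lt_rank
      (by simp [Complex.rank_real_complex])).isConnected.isPreconnected
    (fun z hz ↦ (hd z hz).differentiableAt.differentiableWithinAt)
    (fun z hz ↦ (hd z hz).deriv)
  exact ⟨c, fun z hz ↦ by linear_combination hc z hz⟩

/-- Second order Taylor expansion of an analytic function. -/
lemma taylor2 (f : ℂ → ℂ) (x a b : ℂ) (hf : AnalyticAt ℂ f x) (h1 : deriv f x = a)
    (h2 : deriv (deriv f) x = b) : ∃ g : ℂ → ℂ, ContinuousAt g 0 ∧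
      ∀ᶠ z in 𝓝 0, f (x + z) = f x + a * z + b / 2 * z ^ 2 + z ^ 3 * g z := by
  have hf' : AnalyticAt ℂ (fun z ↦ f (x + z)) 0 :=
    AnalyticAt.comp (by simpa using hf) (by fun_prop)
  obtain ⟨F, hF, h⟩ := hf'.exists_eventuallyEq_sum_add_pow_mul 3
  refine ⟨F, hF.continuousAt, ?_⟩
  have e1 : deriv (fun z ↦ f (x + z)) = fun z ↦ deriv f (x + z) := by
    ext z; exact deriv_comp_const_add f x z
  have e2 : deriv (fun z ↦ deriv f (x + z)) 0 = b := by
    rw [deriv_comp_const_add (deriv f) x 0, add_zero, h2]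
  filter_upwards [h] with z hz
  rw [hz]
  simp [Finset.sum_range_succ, iteratedDeriv_succ, iteratedDeriv_zero, h1, e1, e2, Nat.factorial]
  ring

lemma zetaE_zero : zetaE L 0 = 0 := by
  simp [zetaE]

lemma zetaE_taylor : ∃ g : ℂ → ℂ, ContinuousAt g 0 ∧ ∀ᶠ z in 𝓝 0, zetaE L z = z ^ 3 * g z := by
  have hm : (L.lattice \ {0} : Set ℂ)ᶜ ∈ 𝓝 (0 : ℂ) := L.compl_lattice_sdiff_singleton_mem_nhds 0
  have ha : AnalyticAt ℂ (zetaE L) 0 :=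
    (differentiableOn_zetaE L).analyticAt hm
  have hd : deriv (zetaE L) =ᶠ[𝓝 0] fun z ↦ - weierstrassPExcept L 0 z :=
    Filter.eventually_of_mem hm (deriv_zetaE L)
  obtain ⟨g, hg, h⟩ := taylor2 (zetaE L) 0 0 0 ha (by rw [hd.eq_of_nhds]; simp)
    (by rw [hd.deriv_eq]; simp)
  exact ⟨g, hg, by simpa [zetaE_zero] using h⟩

lemma PE_taylor : ∃ g : ℂ → ℂ, ∃ c : ℂ, ContinuousAt g 0 ∧
    ∀ᶠ z in 𝓝 0, weierstrassPExcept L 0 z = c * z ^ 2 + z ^ 3 * g z := by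
  obtain ⟨g, hg, h⟩ := taylor2 (weierstrassPExcept L 0) 0 0 _ (L.analyticAt_weierstrassPExcept 0)
    (by simp) rfl
  exact ⟨g, _, hg, by simpa using h⟩

lemma eventually_notMem (c b : ℂ) : ∀ᶠ z in 𝓝[≠] c, z ∉ L.lattice ∧ z + b ∉ L.lattice := by
  have h1 := L.compl_lattice_sdiff_singleton_mem_nhds c
  have h2 : ∀ᶠ z in 𝓝 c, z + b ∈ (↑L.lattice \ {c + b} : Set ℂ)ᶜ := by
    have : ContinuousAt (fun z ↦ z + b) c := by fun_prop
    exact this.eventually (L.compl_lattice_sdiff_singleton_mem_nhds (c + b))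
  rw [eventually_nhdsWithin_iff]
  filter_upwards [h1, h2] with z h1 h2 hz
  refine ⟨fun h ↦ h1 ⟨h, hz⟩, fun h ↦ h2 ⟨h, fun e ↦ hz ?_⟩⟩
  simpa using e

/-- The defect in the addition theorem. -/
noncomputable def A (b a : ℂ) : ℂ :=
  (zeta L (a + b) - zeta L a - zeta L b) * (weierstrassP L a - weierstrassP L b)
    - 1 / 2 * (derivWeierstrassP L a - derivWeierstrassP L b)

open Classical in
/-- The defect, extended by zero. -/
noncomputable def B (b a : ℂ) : ℂ :=
  if a ∈ L.lattice ∨ a + b ∈ L.lattice then 0 else A L b a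

lemma B_periodic (b a l : ℂ) (hl : l ∈ L.lattice) : B L b (a + l) = B L b a := by
  have e1 : a + l ∈ L.lattice ↔ a ∈ L.lattice :=
    ⟨fun h ↦ by simpa using sub_mem h hl, fun h ↦ add_mem h hl⟩
  have e2 : a + l + b ∈ L.lattice ↔ a + b ∈ L.lattice :=
    ⟨fun h ↦ by simpa [add_sub_assoc, add_right_comm] using sub_mem h hl,
      fun h ↦ by rw [add_right_comm]; exact add_mem h hl⟩
  unfold B
  rw [e1, e2]
  split_ifs with h
  · rfl
  rw [not_or] at h
  obtain ⟨c, hc⟩ := zeta_quasi L l hl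
  have h1 : weierstrassP L (a + l) = _ := L.weierstrassP_add_coe a ⟨l, hl⟩
  have h2 : derivWeierstrassP L (a + l) = _ := L.derivWeierstrassP_add_coe a ⟨l, hl⟩
  unfold A
  rw [add_right_comm, hc _ h.2, hc _ h.1, h1, h2]
  ring

lemma zeta_analytic {b : ℂ} (hb : b ∉ L.lattice) : AnalyticAt ℂ (zeta L) b := by
  have : DifferentiableOn ℂ (zeta L) (L.lattice : Set ℂ)ᶜ :=
    fun z hz ↦ (hasDerivAt_zeta L hz).differentiableAt.differentiableWithinAt
  exact this.analyticAt (L.isClosed_lattice.isOpen_compl.mem_nhds hb)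

lemma A_tendsto_zero (b : ℂ) (hb : b ∉ L.lattice) : Tendsto (A L b) (𝓝[≠] 0) (𝓝 0) := by
  obtain ⟨h, hh, h'⟩ := zetaE_taylor L
  obtain ⟨g, c, hg, g'⟩ := PE_taylor L
  have hd : deriv (zeta L) =ᶠ[𝓝 b] fun z ↦ - weierstrassP L z := by
    filter_upwards [L.isClosed_lattice.isOpen_compl.mem_nhds hb] with z hz
    exact (hasDerivAt_zeta L hz).deriv
  obtain ⟨k, hk, k'⟩ := taylor2 (zeta L) b (-weierstrassP L b) (- derivWeierstrassP L b)
    (zeta_analytic L hb) hd.eq_of_nhds (by rw [hd.deriv_eq]; simp)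
  have hD : ContinuousAt (derivWeierstrassPExcept L 0) 0 :=
    (L.analyticAt_derivWeierstrassPExcept 0).continuousAt
  set P := weierstrassP L b
  set D := derivWeierstrassP L b
  have hR : Tendsto (fun a ↦ - (c * a + a ^ 2 * g a) - P * a * (c * a ^ 2 + a ^ 3 * g a - P)
      - 1 / 2 * D * a ^ 2 * (c * a ^ 2 + a ^ 3 * g a - P) + a * (k a - h a)
      + a ^ 3 * (k a - h a) * (c * a ^ 2 + a ^ 3 * g a - P)
      - 1 / 2 * derivWeierstrassPExcept L 0 a) (𝓝[≠] 0) (𝓝 0) := by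
    have : ContinuousAt (fun a ↦ - (c * a + a ^ 2 * g a) - P * a * (c * a ^ 2 + a ^ 3 * g a - P)
      - 1 / 2 * D * a ^ 2 * (c * a ^ 2 + a ^ 3 * g a - P) + a * (k a - h a)
      + a ^ 3 * (k a - h a) * (c * a ^ 2 + a ^ 3 * g a - P)
      - 1 / 2 * derivWeierstrassPExcept L 0 a) 0 := by fun_prop
    simpa [ContinuousAt] using this.tendsto.mono_left nhdsWithin_le_nhds
  refine hR.congr' ?_
  filter_upwards [nhdsWithin_le_nhds h', nhdsWithin_le_nhds g', nhdsWithin_le_nhds k',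
    self_mem_nhdsWithin] with a h' g' k' ha
  have ha : a ≠ 0 := ha
  unfold A
  rw [add_comm a b, k', weierstrassP_eq, derivWeierstrassP_eq, g']
  unfold zeta
  rw [h']
  field_simp
  ring

lemma A_tendsto_neg (b : ℂ) (hb : b ∉ L.lattice) : Tendsto (A L b) (𝓝[≠] (-b)) (𝓝 0) := by
  have hb' : -b ∉ L.lattice := fun h ↦ hb (by simpa using neg_mem h)
  obtain ⟨g, hg, g'⟩ := taylor2 (weierstrassP L) (-b) (- derivWeierstrassP L b) _
    (L.analyticOnNhd_weierstrassP _ hb') (by simp) rfl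
  set n := deriv (deriv (weierstrassP L)) (-b)
  set D := derivWeierstrassP L b with hDdef
  have hE : ContinuousAt (zetaE L) 0 := ((differentiableOn_zetaE L).differentiableAt
    (L.compl_lattice_sdiff_singleton_mem_nhds 0)).continuousAt
  have hz : ContinuousAt (fun t ↦ zeta L (-b + t)) 0 := 
    ContinuousAt.comp (f := fun t ↦ -b + t) (g := zeta L)
      (by simpa using (zeta_analytic L hb').continuousAt) (by fun_prop)
  have hD : ContinuousAt (fun t ↦ derivWeierstrassP L (-b + t)) 0 := 
    ContinuousAt.comp (f := fun t ↦ -b + t) (g := derivWeierstrassP L)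
      (by simpa using (L.analyticOnNhd_derivWeierstrassP _ hb').continuousAt)
      (by fun_prop)
  have hR : Tendsto (fun t ↦ (1 + t * (zetaE L t - zeta L (-b + t) - zeta L b)) *
      (- D + n / 2 * t + t ^ 2 * g t) - 1 / 2 * (derivWeierstrassP L (-b + t) - D))
      (𝓝[≠] 0) (𝓝 0) := by
    have : ContinuousAt (fun t ↦ (1 + t * (zetaE L t - zeta L (-b + t) - zeta L b)) *
      (- D + n / 2 * t + t ^ 2 * g t) - 1 / 2 * (derivWeierstrassP L (-b + t) - D)) 0 := by
      fun_prop
    have h2 := this.tendsto.mono_left (nhdsWithin_le_nhds (s := {0}ᶜ))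
    convert h2 using 2
    simp [← hDdef]; ring
  have hA : Tendsto (fun t ↦ A L b (-b + t)) (𝓝[≠] 0) (𝓝 0) := by
    refine hR.congr' ?_
    filter_upwards [nhdsWithin_le_nhds g', self_mem_nhdsWithin] with t g' ht
    have ht : t ≠ 0 := ht
    unfold A
    rw [g', weierstrassP_neg, show -b + t + b = t by ring, ← hDdef]
    rw [show zeta L t = 1 / t + zetaE L t from rfl]
    field_simp
    ring
  have hm : Tendsto (fun z ↦ z + b) (𝓝[≠] (-b)) (𝓝[≠] 0) := by
    refine tendsto_nhdsWithin_iff.mpr ⟨?_, ?_⟩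
    · have : ContinuousAt (fun z ↦ z + b) (-b) := by fun_prop
      simpa using this.tendsto.mono_left (nhdsWithin_le_nhds (s := {-b}ᶜ))
    · filter_upwards [self_mem_nhdsWithin] with z hz h
      exact hz (by simpa using eq_neg_of_add_eq_zero_left h)
  refine (hA.comp hm).congr fun z ↦ ?_
  simp

lemma A_differentiableAt {b z : ℂ} (h : z ∉ L.lattice ∧ z + b ∉ L.lattice) :
    DifferentiableAt ℂ (A L b) z := by
  have h1 := (hasDerivAt_zeta L h.1).differentiableAt
  have h2 := ((hasDerivAt_zeta L h.2).comp_add_const z b).differentiableAt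
  have h3 := (hasDerivAt_P L h.1).differentiableAt
  have h4 := differentiableAt_P' L h.1
  unfold A
  fun_prop

lemma B_eventuallyEq {b z : ℂ} (h : z ∉ L.lattice ∧ z + b ∉ L.lattice) :
    B L b =ᶠ[𝓝 z] A L b := by
  have h1 := L.isClosed_lattice.isOpen_compl.mem_nhds h.1
  have h2 : ∀ᶠ w in 𝓝 z, w + b ∈ (↑L.lattice : Set ℂ)ᶜ := by
    have : ContinuousAt (fun z ↦ z + b) z := by fun_prop
    exact this.eventually (L.isClosed_lattice.isOpen_compl.mem_nhds h.2)
  filter_upwards [h1, h2] with w h1 h2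
  unfold B
  rw [if_neg]
  rintro (h | h)
  · exact h1 h
  · exact h2 h

lemma B_differentiableAt {b z : ℂ} (h : z ∉ L.lattice ∧ z + b ∉ L.lattice) :
    DifferentiableAt ℂ (B L b) z :=
  (A_differentiableAt L h).congr_of_eventuallyEq (B_eventuallyEq L h)

lemma B_differentiableAt_of_tendsto {b c : ℂ} (hc : c ∈ L.lattice ∨ c + b ∈ L.lattice)
    (h : Tendsto (A L b) (𝓝[≠] c) (𝓝 0)) : DifferentiableAt ℂ (B L b) c := by
  have ev := eventually_notMem L c b
  refine (Complex.analyticAt_of_differentiable_on_punctured_nhds_of_continuousAt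
    (ev.mono fun z hz ↦ B_differentiableAt L hz) ?_).differentiableAt
  rw [continuousAt_iff_punctured_nhds]
  have : B L b c = 0 := by unfold B; rw [if_pos hc]
  rw [this]
  exact h.congr' (ev.mono fun z hz ↦ (B_eventuallyEq L hz).eq_of_nhds.symm)

lemma B_differentiable (b : ℂ) (hb : b ∉ L.lattice) : Differentiable ℂ (B L b) := by
  have shift : ∀ c l : ℂ, l ∈ L.lattice → DifferentiableAt ℂ (B L b) c →
      DifferentiableAt ℂ (B L b) (c + l) := by
    intro c l hl h
    have e : B L b = fun z ↦ B L b (z - l) := by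
      ext z
      simpa using B_periodic L b (z - l) l hl
    rw [e]
    exact DifferentiableAt.comp (f := fun z ↦ z - l) (g := B L b) (c + l) (by simpa using h) (by fun_prop)
  intro z
  by_cases h1 : z ∈ L.lattice
  · simpa using shift 0 z h1 (B_differentiableAt_of_tendsto L (by simp) (A_tendsto_zero L b hb))
  by_cases h2 : z + b ∈ L.lattice
  · simpa using shift (-b) (z + b) h2
      (B_differentiableAt_of_tendsto L (by simp) (A_tendsto_neg L b hb))
  exact B_differentiableAt L ⟨h1, h2⟩

lemma addition (a b : ℂ) (ha : a ∉ L.lattice) (hb : b ∉ L.lattice) (hab : a + b ∉ L.lattice) :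
    A L b a = 0 := by
  have hd := B_differentiable L b hb
  have h := hd.apply_eq_apply_of_bounded (IsZLattice.isCompact_range_of_periodic L.lattice _
    hd.continuous fun z w hw ↦ B_periodic L b z w hw).isBounded a 0
  rw [(B_eventuallyEq L ⟨ha, hab⟩).eq_of_nhds] at h
  rw [h]
  unfold B
  simp

end ThreePt

namespace ThreePt

/-- The period pair of the rectangular lattice. -/
def rect (ℓ δ : ℝ) (hℓ : 0 < ℓ) (hδ : 0 < δ) : PeriodPair where
  ω₁ := 2 * (ℓ : ℂ)
  ω₂ := 2 * ((δ : ℂ) * Complex.I)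
  indep := by
    rw [LinearIndependent.pair_iff]
    intro s t h
    have h1 := congrArg Complex.re h
    have h2 := congrArg Complex.im h
    simp at h1 h2
    exact ⟨h1.resolve_right hℓ.ne', h2.resolve_right hδ.ne'⟩

lemma mem_rect (ℓ δ : ℝ) (hℓ : 0 < ℓ) (hδ : 0 < δ) (z : ℂ) :
    z ∈ (rect ℓ δ hℓ hδ).lattice ↔ z ∈ Lambda ℓ δ := by
  rw [PeriodPair.mem_lattice]
  simp only [Lambda, Set.mem_ofPred_eq, rect]
  constructor
  · rintro ⟨m, n, h⟩
    exact ⟨m, n, by rw [← h]; ring⟩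
  · rintro ⟨m, n, h⟩
    exact ⟨m, n, by rw [h]; ring⟩

lemma tsum_rect (ℓ δ : ℝ) (hℓ : 0 < ℓ) (hδ : 0 < δ) (f : ℂ → ℂ) :
    ∑' ω : latticePts ℓ δ, f ω =
      ∑' l : (rect ℓ δ hℓ hδ).lattice, if l.1 = 0 then 0 else f l.1 := by
  classical
  have h1 : ∑' l : (rect ℓ δ hℓ hδ).lattice, (if l.1 = 0 then 0 else f l.1)
      = ∑' l : ((rect ℓ δ hℓ hδ).lattice : Set ℂ), (fun z ↦ if z = 0 then 0 else f z) l.1 := rfl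
  rw [h1, _root_.tsum_subtype (latticePts ℓ δ) f,
    _root_.tsum_subtype ((rect ℓ δ hℓ hδ).lattice : Set ℂ) (fun z ↦ if z = 0 then 0 else f z)]
  refine tsum_congr fun z ↦ ?_
  have := mem_rect ℓ δ hℓ hδ z
  by_cases hz : z = 0 <;> by_cases hm : z ∈ Lambda ℓ δ <;>
    simp [Set.indicator, latticePts, this, hz, hm]

lemma wZeta_eq (ℓ δ : ℝ) (hℓ : 0 < ℓ) (hδ : 0 < δ) (z : ℂ) :
    wZeta ℓ δ z = zeta (rect ℓ δ hℓ hδ) z := by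
  unfold wZeta zeta zetaE
  rw [tsum_rect ℓ δ hℓ hδ (fun ω ↦ 1 / (z - ω) + 1 / ω + z / ω ^ 2)]

lemma wP_eq (ℓ δ : ℝ) (hℓ : 0 < ℓ) (hδ : 0 < δ) (z : ℂ) :
    wP ℓ δ z = PeriodPair.weierstrassP (rect ℓ δ hℓ hδ) z := by
  rw [weierstrassP_eq]
  unfold wP PeriodPair.weierstrassPExcept
  rw [tsum_rect ℓ δ hℓ hδ (fun ω ↦ 1 / (z - ω) ^ 2 - 1 / ω ^ 2), add_comm]

lemma deriv_f2 (ℓ δ : ℝ) (hℓ : 0 < ℓ) (hδ : 0 < δ) (z : ℂ)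
    (hz : z ∉ (rect ℓ δ hℓ hδ).lattice) :
    deriv (f2 ℓ δ) z = - 2 * zeta2 ℓ δ z * wp2 ℓ δ z
      - PeriodPair.derivWeierstrassP (rect ℓ δ hℓ hδ) z := by
  have e1 : wZeta ℓ δ = zeta (rect ℓ δ hℓ hδ) := funext (wZeta_eq ℓ δ hℓ hδ)
  have e2 : wP ℓ δ = PeriodPair.weierstrassP (rect ℓ δ hℓ hδ) := funext (wP_eq ℓ δ hℓ hδ)
  have h1 := hasDerivAt_zeta _ hz
  have h2 := hasDerivAt_P _ hz
  rw [← e1, ← e2] at h1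
  rw [← e2] at h2
  have h3 : HasDerivAt (zeta2 ℓ δ) (- wp2 ℓ δ z) z := by
    refine (h1.sub ((hasDerivAt_id z).const_mul
      (wZeta ℓ δ ((δ : ℂ) * Complex.I) / ((δ : ℂ) * Complex.I)))).congr_deriv ?_
    unfold wp2
    ring
  have h4 := (h3.pow 2).sub (h2.add_const
      (wZeta ℓ δ ((δ : ℂ) * Complex.I) / ((δ : ℂ) * Complex.I)))
  refine (h4.congr_deriv ?_).deriv
  simp

end ThreePt

/-- The three-point identity for `ζ₂`, `℘₂` and `f₂′`. -/
theorem zeta2_wp2_three_point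
    (ℓ δ : ℝ) (hℓ : 0 < ℓ) (hδ : 0 < δ)
    (u v w : ℂ) (huv : u - v ∉ Lambda ℓ δ) (huw : u - w ∉ Lambda ℓ δ)
    (hvw : v - w ∉ Lambda ℓ δ) :
    (zeta2 ℓ δ (u - w) - zeta2 ℓ δ (v - w)) * wp2 ℓ δ (u - v)
      = -((zeta2 ℓ δ (u - v) - zeta2 ℓ δ (u - w)) * wp2 ℓ δ (v - w))
        - (1/2 : ℂ) * (deriv (f2 ℓ δ) (u - v) - deriv (f2 ℓ δ) (v - w)) := by
  have ha := (ThreePt.mem_rect ℓ δ hℓ hδ _).not.mpr huv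
  have hb := (ThreePt.mem_rect ℓ δ hℓ hδ _).not.mpr hvw
  have hab := (ThreePt.mem_rect ℓ δ hℓ hδ _).not.mpr huw
  have key := ThreePt.addition (ThreePt.rect ℓ δ hℓ hδ) (u - v) (v - w) ha hb (by simpa using hab)
  rw [ThreePt.deriv_f2 ℓ δ hℓ hδ _ ha, ThreePt.deriv_f2 ℓ δ hℓ hδ _ hb]
  unfold ThreePt.A at key
  rw [sub_add_sub_cancel, ← ThreePt.wZeta_eq, ← ThreePt.wZeta_eq, ← ThreePt.wZeta_eq,
    ← ThreePt.wP_eq, ← ThreePt.wP_eq] at key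
  unfold zeta2 wp2
  linear_combination key

end
end
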